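/- Let ψ : (0,∞) → ℝ be one of the functions ψ(x) = x², ψ(x) = x^p for some p < 0, or ψ(x) = −log x. Let n ≥ 1 be an integer and θ ∈ (0, π/2]. Suppose h : C_θ → (0,∞) is a C³ capillary function with τ[h] ≥ 0. Then there exists a compact convex set 𝔖̂ ⊂ {x_{n+1} ≥ 0} with nonempty interior such that Ω := 𝔖̂ ∩ {x_{n+1} = 0} has nonempty interior relative to the hyperplane {x_{n+1} = 0} and h(ζ) = h_{𝔖̂}(ζ + cos θ E_{n+1}) for all ζ ∈ C_θ. Moreover there is a unique point z in the relative interior of Ω such that ∫_{C_θ} ψ'(h(ζ) − ⟨ζ, z⟩) ζ_i dσ(ζ) = 0 for all i = 1,…,n, and h(ζ) − ⟨ζ, z⟩ > 0 for all ζ ∈ C_θ. -/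

import Mathlib

open MeasureTheory Real Set
open scoped RealInnerProductSpace

noncomputable section

abbrev V (n : ℕ) := EuclideanSpace ℝ (Fin (n + 1))

/-- The vertical unit vector `E_{n+1}`. -/
def Etop (n : ℕ) : V n := EuclideanSpace.single (Fin.last n) 1

/-- The spherical cap `S^n_θ`. -/
def sphCap (n : ℕ) (θ : ℝ) : Set (V n) :=
  {u | ‖u‖ = 1 ∧ Real.cos θ ≤ u (Fin.last n)}

/-- The boundary circle `∂S^n_θ`. -/
def sphCapBdry (n : ℕ) (θ : ℝ) : Set (V n) :=
  {u | ‖u‖ = 1 ∧ u (Fin.last n) = Real.cos θ}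

/-- The capillary cap `C_θ`. -/
def capCap (n : ℕ) (θ : ℝ) : Set (V n) :=
  {ζ | 0 ≤ ζ (Fin.last n) ∧ ‖ζ + Real.cos θ • Etop n‖ = 1}

/-- The open cone over `S^n_θ`. -/
def coneCap (n : ℕ) (θ : ℝ) : Set (V n) :=
  {x | ∃ l : ℝ, 0 < l ∧ ∃ u ∈ sphCap n θ, x = l • u}

/-- `G` is a positively 1-homogeneous extension of `g : C_θ → ℝ` which is `C^m` on an
open neighborhood of the cone over `S^n_θ`. -/
def IsHomExt (n : ℕ) (θ : ℝ) (m : ℕ∞) (g G : V n → ℝ) : Prop :=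
  (∃ U : Set (V n), IsOpen U ∧ coneCap n θ ⊆ U ∧ ContDiffOn ℝ m G U) ∧
  (∀ l : ℝ, 0 < l → ∀ u ∈ sphCap n θ, G (l • u) = l * G u) ∧
  (∀ ζ ∈ capCap n θ, G (ζ + Real.cos θ • Etop n) = g ζ)

/-- The Hessian of `G` at `u` as a quadratic/bilinear form. -/
def hessQ (n : ℕ) (G : V n → ℝ) (u v w : V n) : ℝ :=
  fderiv ℝ (fderiv ℝ G) u v w

/-- The Hessian matrix `D²G(u)` in the standard coordinates. -/
def hessM (n : ℕ) (G : V n → ℝ) (u : V n) : Matrix (Fin (n + 1)) (Fin (n + 1)) ℝ :=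
  fun i j => fderiv ℝ (fderiv ℝ G) u (EuclideanSpace.single i 1) (EuclideanSpace.single j 1)

/-- `σ_j` of the eigenvalues of `D²G(u)` (via characteristic polynomial coefficients). -/
def sigmaElem (n : ℕ) (j : ℕ) (G : V n → ℝ) (u : V n) : ℝ :=
  (-1 : ℝ) ^ j * ((hessM n G u).charpoly.coeff (n + 1 - j))

/-- `τ[g] ≥ 0` : the Hessian of the extension is positive semidefinite on `S^n_θ`. -/
def TauNonneg (n : ℕ) (θ : ℝ) (G : V n → ℝ) : Prop :=
  ∀ u ∈ sphCap n θ, ∀ v : V n, 0 ≤ hessQ n G u v v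

/-- `τ[g] > 0`. -/
def TauPos (n : ℕ) (θ : ℝ) (G : V n → ℝ) : Prop :=
  TauNonneg n θ G ∧
  ∀ u ∈ sphCap n θ, ∀ v : V n, v ≠ 0 → ⟪v, u⟫ = 0 → 0 < hessQ n G u v v

/-- Capillary (Robin) boundary condition: `∂_{n+1}G = 0` on `∂S^n_θ`. -/
def IsCapillaryF (n : ℕ) (θ : ℝ) (G : V n → ℝ) : Prop :=
  ∀ u ∈ sphCapBdry n θ, fderiv ℝ G u (Etop n) = 0

/-- Reflection negating the horizontal coordinates. -/
def horizNeg (n : ℕ) (ζ : V n) : V n := (2 * ζ (Fin.last n)) • Etop n - ζ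

/-- Support function of a set. -/
def suppFn (n : ℕ) (K : Set (V n)) (u : V n) : ℝ := sSup ((fun y => ⟪u, y⟫) '' K)

/-- Relative interior (within the hyperplane `{x_{n+1}=0}`) of the base `K ∩ {x_{n+1}=0}`. -/
def relintBase (n : ℕ) (K : Set (V n)) : Set (V n) :=
  {x | x (Fin.last n) = 0 ∧ ∃ ε > 0, ∀ y : V n, y (Fin.last n) = 0 → ‖y - x‖ < ε → y ∈ K}

/-- A `θ`-capillary convex body. -/
def IsCapBody (n : ℕ) (θ : ℝ) (K : Set (V n)) : Prop :=
  IsCompact K ∧ Convex ℝ K ∧ (interior K).Nonempty ∧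
  (∀ x ∈ K, 0 ≤ x (Fin.last n)) ∧
  (∀ x ∈ K, 0 < x (Fin.last n) → ∀ u : V n, ‖u‖ = 1 → ⟪u, x⟫ = suppFn n K u →
    Real.cos θ ≤ u (Fin.last n)) ∧
  (∀ v : V n, ‖v‖ = 1 → v (Fin.last n) = 0 →
    suppFn n K (Real.sin θ • v + Real.cos θ • Etop n) = Real.sin θ * suppFn n K v) ∧
  (relintBase n K).Nonempty

/-- `ψ` is one of `x²`, `x^p (p<0)`, `-log x`. -/
def PsiOK (ψ : ℝ → ℝ) : Prop :=
  (ψ = fun x : ℝ => x ^ 2) ∨ (∃ p : ℝ, p < 0 ∧ ψ = fun x : ℝ => x ^ p) ∨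
    (ψ = fun x : ℝ => -Real.log x)

/-! Along a great circle arc of the cap, `τ[h] ≥ 0` makes `H` a supersolution of `y'' + y = 0`, so
by comparison `⟪∇H(u), w⟫ ≤ H w` for all `u` and `w` in the cap; the boundary condition spreads
inwards along meridians to `∂_{n+1}H ≥ 0`. Hence every gradient `∇H(u)` lies in the Wulff shape of
`H`, whose support function on the cap is therefore `H`.

An entropy point is a critical point of the strictly convex functional `z ↦ ∫ ψ (H u - ⟪u, z⟫)`,
which gives uniqueness. As `ψ'` may blow up at `0`, freeze it below `c > 0`: the functional then has
a minimiser on the compact base of the Wulff shape, and it remains to see that a limit `z` of these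
minimisers as `c → 0` is interior to the base. If it is not, the Wulff shape has a horizontal outer
normal `v` at `z` with `⟪u, v⟫ > 0` for all `u` with `H u = ⟪u, z⟫`. The reflection in `v^⊥`
preserves the cap, and folding the integral along it shows that moving from `z` in the direction
`-v` decreases the functional, against minimality. -/

section Comparison

theorem cos_mul_add_sin_mul_le {f f' f'' : ℝ → ℝ} {T : ℝ} (hT : T ∈ Icc 0 π)
    (hf : ∀ t ∈ Icc 0 T, HasDerivAt f (f' t) t) (hf' : ∀ t ∈ Icc 0 T, HasDerivAt f' (f'' t) t)
    (hnonneg : ∀ t ∈ Icc 0 T, 0 ≤ f'' t + f t) :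
    cos T * f 0 + sin T * f' 0 ≤ f T := by
  -- The Wronskian of `f` with the solution `t ↦ sin (T - t)` of `y'' + y = 0` is monotone.
  let W : ℝ → ℝ := fun t => cos (T - t) * f t + sin (T - t) * f' t
  have hW : ∀ t ∈ Icc 0 T, HasDerivAt W (sin (T - t) * (f'' t + f t)) t := fun t ht => by
    have hsub : HasDerivAt (fun t => T - t) (-1) t := by simpa using (hasDerivAt_id t).const_sub T
    exact ((hsub.cos.mul (hf t ht)).add (hsub.sin.mul (hf' t ht))).congr_deriv (by ring)
  have hmono : MonotoneOn W (Icc 0 T) := by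
    refine monotoneOn_of_hasDerivWithinAt_nonneg (convex_Icc 0 T)
      (fun t ht => (hW t ht).continuousAt.continuousWithinAt)
      (fun t ht => (hW t (interior_subset ht)).hasDerivWithinAt) fun t ht => ?_
    have ht := interior_subset ht
    exact mul_nonneg (sin_nonneg_of_nonneg_of_le_pi (by linarith [ht.2])
      (by linarith [ht.1, hT.2])) (hnonneg t ht)
  simpa [W] using hmono (left_mem_Icc.2 hT.1) (right_mem_Icc.2 hT.1) hT.1

end Comparison

section OneVariable

theorem PsiOK.continuousOn_deriv {ψ : ℝ → ℝ} (hψ : PsiOK ψ) : ContinuousOn (deriv ψ) (Ioi 0) := by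
  have hne : ∀ x ∈ Ioi (0 : ℝ), x ≠ 0 := fun x hx => ne_of_gt hx
  rcases hψ with rfl | ⟨p, -, rfl⟩ | rfl
  · have hcont : ContinuousOn (fun x : ℝ => 2 * x) (Ioi 0) := by fun_prop
    exact hcont.congr fun x _ => by simp
  · exact (continuousOn_const.mul (continuousOn_id.rpow_const fun x hx => Or.inl (hne x hx))).congr
      fun x _ => Real.deriv_rpow_const x p
  · exact (continuousOn_inv₀.mono hne).neg.congr fun x _ => by simp

theorem PsiOK.strictMonoOn_deriv {ψ : ℝ → ℝ} (hψ : PsiOK ψ) :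
    StrictMonoOn (deriv ψ) (Ioi 0) := by
  rintro x (hx : 0 < x) y - hxy
  rcases hψ with rfl | ⟨p, hp, rfl⟩ | rfl
  · simp [hxy]
  · simp only [Real.deriv_rpow_const]
    exact mul_lt_mul_of_neg_left (Real.rpow_lt_rpow_of_neg hx hxy (by linarith)) hp
  · simp only [deriv.fun_neg, Real.deriv_log, neg_lt_neg_iff]
    exact inv_strictAnti₀ hx hxy

theorem intervalIntegral_le_mul_sub_of_monotone {χ : ℝ → ℝ} (hχ : Monotone χ) (a b : ℝ) :
    ∫ x in b..a, χ x ≤ χ a * (a - b) := by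
  rcases le_total b a with hba | hab
  · have := intervalIntegral.integral_mono_on (μ := volume) hba hχ.intervalIntegrable
      intervalIntegrable_const fun x hx => hχ hx.2
    rwa [intervalIntegral.integral_const, smul_eq_mul, mul_comm] at this
  · have := intervalIntegral.integral_mono_on (μ := volume) hab intervalIntegrable_const
      hχ.intervalIntegrable fun x hx => hχ hx.1
    rw [intervalIntegral.integral_const, smul_eq_mul] at this
    rw [intervalIntegral.integral_symm]
    linarith

/-- The function `φ` frozen at its value `φ c` to the left of `c`. A function on `(0, ∞)` thereby
becomes defined, with the same monotonicity, on all of `ℝ`. -/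
def freezeBelow (φ : ℝ → ℝ) (c x : ℝ) : ℝ := φ (max x c)

variable {φ : ℝ → ℝ} {a c : ℝ}

theorem freezeBelow_of_le {x : ℝ} (hx : c ≤ x) : freezeBelow φ c x = φ x := by
  rw [freezeBelow, max_eq_left hx]

theorem continuous_freezeBelow (hφ : ContinuousOn φ (Ioi a)) (hc : a < c) :
    Continuous (freezeBelow φ c) :=
  hφ.comp_continuous (by fun_prop) fun _ => lt_max_of_lt_right hc

theorem monotone_freezeBelow (hφ : MonotoneOn φ (Ioi a)) (hc : a < c) :
    Monotone (freezeBelow φ c) := fun _ _ hxy =>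
  hφ (lt_max_of_lt_right hc) (lt_max_of_lt_right hc) (max_le_max_right c hxy)

theorem freezeBelow_lt_freezeBelow (hφ : StrictMonoOn φ (Ioi a)) (hc : a < c) {x y : ℝ}
    (hx : x ≤ c) (hy : c < y) : freezeBelow φ c x < freezeBelow φ c y := by
  rw [freezeBelow, max_eq_right hx, freezeBelow_of_le hy.le]
  exact hφ hc (hc.trans hy) hy

theorem freezeBelow_le_freezeBelow (hφ : MonotoneOn φ (Ioi a)) {b : ℝ} (hb : a < b) (hbc : b ≤ c)
    (x : ℝ) : freezeBelow φ b x ≤ freezeBelow φ c x :=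
  hφ (lt_max_of_lt_right hb) (lt_max_of_lt_right (hb.trans_le hbc)) (max_le_max_left x hbc)

end OneVariable

section SphereMeasure

open Metric Module

variable {E : Type*} [NormedAddCommGroup E] [InnerProductSpace ℝ E]

theorem hemisphere_subset_image_stereoInvFunAux {v : E} (hv : ‖v‖ = 1) :
    {u ∈ sphere (0 : E) 1 | ⟪v, u⟫ ≤ 0} ⊆
      (fun w : (ℝ ∙ v)ᗮ => stereoInvFunAux v w) '' closedBall 0 2 := by
  rintro u ⟨hu, hvu⟩
  have hne : u ≠ v := by
    rintro rfl
    norm_num [hv] at hvu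
  refine ⟨stereoToFun v u, ?_, congrArg Subtype.val (stereo_left_inv hv (x := ⟨u, hu⟩) hne)⟩
  have hcoeff : |2 / (1 - ⟪v, u⟫)| ≤ 2 := by
    rw [abs_of_nonneg (div_nonneg two_pos.le (by linarith)), div_le_iff₀ (by linarith)]
    linarith
  have hproj : ‖(ℝ ∙ v)ᗮ.orthogonalProjectionOnto u‖ ≤ 1 :=
    ((ℝ ∙ v)ᗮ.norm_orthogonalProjectionOnto_apply_le u).trans (mem_sphere_zero_iff_norm.1 hu).le
  rw [mem_closedBall_zero_iff, stereoToFun_apply, norm_smul, Real.norm_eq_abs]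
  exact (mul_le_mul hcoeff hproj (norm_nonneg _) two_pos.le).trans_eq (mul_one 2)

variable [MeasurableSpace E] [BorelSpace E] {n : ℕ} [Fact (finrank ℝ E = n + 1)]

theorem isAddHaarMeasure_hausdorffMeasure_orthogonal {v : E} (hv : ‖v‖ = 1) :
    (μH[(n : ℝ)] : Measure (ℝ ∙ v)ᗮ).IsAddHaarMeasure := by
  have := FiniteDimensional.of_fact_finrank_eq_succ (K := ℝ) (V := E) n
  have hv₀ : v ≠ 0 := norm_ne_zero_iff.1 (by simp [hv])
  have := isAddHaarMeasure_hausdorffMeasure (E := (ℝ ∙ v)ᗮ)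
  rwa [Submodule.finrank_orthogonal_span_singleton (n := n) hv₀] at this

theorem hausdorffMeasure_hemisphere_lt_top {v : E} (hv : ‖v‖ = 1) :
    μH[(n : ℝ)] {u ∈ sphere (0 : E) 1 | ⟪v, u⟫ ≤ 0} < ⊤ := by
  have := FiniteDimensional.of_fact_finrank_eq_succ (K := ℝ) (V := E) n
  have := isAddHaarMeasure_hausdorffMeasure_orthogonal (n := n) hv
  have hsmooth : ContDiffOn ℝ 1 (fun w : (ℝ ∙ v)ᗮ => stereoInvFunAux v w) (closedBall 0 2) :=
    (contDiff_stereoInvFunAux.comp (ℝ ∙ v)ᗮ.subtypeL.contDiff).contDiffOn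
  obtain ⟨K, hK⟩ := hsmooth.exists_lipschitzOnWith one_ne_zero (convex_closedBall 0 2)
    (isCompact_closedBall 0 2)
  calc
    μH[(n : ℝ)] {u ∈ sphere (0 : E) 1 | ⟪v, u⟫ ≤ 0}
      ≤ μH[(n : ℝ)] ((fun w : (ℝ ∙ v)ᗮ => stereoInvFunAux v w) '' closedBall 0 2) :=
        measure_mono (hemisphere_subset_image_stereoInvFunAux hv)
    _ ≤ K ^ (n : ℝ) * μH[(n : ℝ)] (closedBall (0 : (ℝ ∙ v)ᗮ) 2) :=
        hK.hausdorffMeasure_image_le (Nat.cast_nonneg n)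
    _ < ⊤ := ENNReal.mul_lt_top (ENNReal.rpow_lt_top_of_nonneg (Nat.cast_nonneg n)
        ENNReal.coe_ne_top) (isCompact_closedBall 0 2).measure_lt_top

theorem hausdorffMeasure_sphere_lt_top : μH[(n : ℝ)] (sphere (0 : E) 1) < ⊤ := by
  have : Nontrivial E := nontrivial_of_finrank_eq_succ (Fact.out : finrank ℝ E = n + 1)
  obtain ⟨v, hv⟩ := exists_norm_eq E zero_le_one
  have hcover : sphere (0 : E) 1 ⊆
      {u ∈ sphere 0 1 | ⟪v, u⟫ ≤ 0} ∪ {u ∈ sphere 0 1 | ⟪-v, u⟫ ≤ 0} := fun u hu =>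
    (le_total ⟪v, u⟫ 0).imp (⟨hu, ·⟩) fun h => ⟨hu, by simpa [inner_neg_left] using h⟩
  exact (measure_mono hcover).trans_lt (measure_union_lt_top
    (hausdorffMeasure_hemisphere_lt_top hv)
    (hausdorffMeasure_hemisphere_lt_top ((norm_neg v).trans hv)))

theorem hausdorffMeasure_inter_sphere_pos {U : Set E} (hU : IsOpen U) {u : E}
    (hu : u ∈ U ∩ sphere 0 1) : 0 < μH[(n : ℝ)] (U ∩ sphere 0 1) := by
  have := FiniteDimensional.of_fact_finrank_eq_succ (K := ℝ) (V := E) n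
  have hnorm : ‖u‖ = 1 := mem_sphere_zero_iff_norm.1 hu.2
  have hv : ‖-u‖ = 1 := (norm_neg u).trans hnorm
  have := isAddHaarMeasure_hausdorffMeasure_orthogonal (n := n) hv
  have hdom : innerSL ℝ (-u) u ≠ (1 : ℝ) := by simp [hnorm]; norm_num
  have hsmooth : ContDiffAt ℝ 1 (stereoToFun (-u)) u :=
    (contDiffOn_stereoToFun.contDiffAt
      ((isOpen_ne_fun (innerSL ℝ (-u)).continuous continuous_const).mem_nhds hdom))
  obtain ⟨K, t, ht, hK⟩ := hsmooth.exists_lipschitzOnWith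
  let W : Set (ℝ ∙ (-u))ᗮ := (fun w => stereoInvFunAux (-u) w) ⁻¹' (interior t ∩ U)
  have hcont : Continuous fun w : (ℝ ∙ (-u))ᗮ => stereoInvFunAux (-u) w :=
    (contDiff_stereoInvFunAux (m := 0)).continuous.comp continuous_subtype_val
  have hW : IsOpen W := (isOpen_interior.inter hU).preimage hcont
  have hzero : (0 : (ℝ ∙ (-u))ᗮ) ∈ W := by
    have : stereoInvFunAux (-u) 0 = u := by simp [stereoInvFunAux_apply]
    simpa [W, this] using ⟨mem_interior_iff_mem_nhds.2 ht, hu.1⟩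
  have hWsub : W ⊆ stereoToFun (-u) '' (t ∩ (U ∩ sphere 0 1)) := fun w hw =>
    ⟨stereoInvFunAux (-u) w, ⟨interior_subset hw.1, hw.2, stereoInvFunAux_mem hv w.2⟩,
      stereo_right_inv hv w⟩
  have hle : μH[(n : ℝ)] W ≤ K ^ (n : ℝ) * μH[(n : ℝ)] (U ∩ sphere 0 1) :=
    (measure_mono hWsub).trans <|
      ((hK.mono inter_subset_left).hausdorffMeasure_image_le (Nat.cast_nonneg n)).trans <| by
        gcongr _ * μH[(n : ℝ)] ?_
        exact inter_subset_right
  exact pos_of_mul_pos_right ((hW.measure_pos _ ⟨0, hzero⟩).trans_le hle) bot_le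

end SphereMeasure

section CompactSpace

variable {X : Type*} [TopologicalSpace X] [CompactSpace X] [MeasurableSpace X] [BorelSpace X]
  {μ : Measure X} [IsFiniteMeasure μ]

theorem integrable_of_continuous {f : X → ℝ} (hf : Continuous f) : Integrable f μ :=
  hf.integrable_of_hasCompactSupport (.of_compactSpace f)

theorem continuous_integral_of_continuous {Y : Type*} [TopologicalSpace Y]
    [FirstCountableTopology Y] [LocallyCompactSpace Y] {f : Y → X → ℝ}
    (hf : Continuous f.uncurry) : Continuous fun y => ∫ x, f y x ∂μ := by
  simpa only [Measure.restrict_univ] using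
    continuous_parametric_integral_of_continuous (μ := μ) hf isCompact_univ

theorem integral_pos_of_continuous [μ.IsOpenPosMeasure] {f : X → ℝ} (hf : Continuous f)
    (hnonneg : 0 ≤ f) {x : X} (hx : 0 < f x) : 0 < ∫ x, f x ∂μ :=
  integral_pos_of_integrable_nonneg_nonzero hf (integrable_of_continuous hf) hnonneg hx.ne'

theorem integral_mul_neg_of_odd [μ.IsOpenPosMeasure] {τ : X ≃ₜ X} (hτ : ∀ x, τ (τ x) = x)
    (hτμ : MeasurePreserving τ μ μ) {f g : X → ℝ} (hf : Continuous f) (hg : Continuous g)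
    (hodd : ∀ x, g (τ x) = -g x) (hle : ∀ x, 0 ≤ g x → f x ≤ f (τ x)) {x₀ : X}
    (hgpos : 0 < g x₀) (hlt : f x₀ < f (τ x₀)) : ∫ x, f x * g x ∂μ < 0 := by
  have hfold : ∫ x, f x * g x ∂μ = -∫ x, f (τ x) * g x ∂μ := by
    rw [← hτμ.integral_comp τ.measurableEmbedding, ← integral_neg]
    simp only [hodd, mul_neg]
  have hnonneg : ∀ x, 0 ≤ (f (τ x) - f x) * g x := fun x => by
    rcases le_total 0 (g x) with hx | hx
    · exact mul_nonneg (sub_nonneg.2 (hle x hx)) hx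
    · have := hle (τ x) (by rw [hodd]; linarith)
      rw [hτ] at this
      exact mul_nonneg_of_nonpos_of_nonpos (sub_nonpos.2 this) hx
  have hpos : 0 < ∫ x, (f (τ x) - f x) * g x ∂μ :=
    integral_pos_of_continuous (by fun_prop) hnonneg (mul_pos (sub_pos.2 hlt) hgpos)
  simp only [sub_mul] at hpos
  rw [integral_sub (integrable_of_continuous (by fun_prop))
    (integrable_of_continuous (by fun_prop))] at hpos
  linarith

end CompactSpace

section DescentRate

open Filter Topology

variable {X E : Type*} [NormedAddCommGroup E] [InnerProductSpace ℝ E]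
  {u : X → E} {η : X → ℝ} {φ χ : ℝ → ℝ} {z w : E}

section MeasurableSpace

variable [MeasurableSpace X] {μ : Measure X}

/-- For `Φ' = φ`, the rate of decrease at `z`, in the direction `w`, of the functional
`z ↦ ∫ Φ (η - ⟪u, z⟫) ∂μ`. -/
def descentRate (μ : Measure X) (u : X → E) (η : X → ℝ) (φ : ℝ → ℝ) (z w : E) : ℝ :=
  ∫ x, φ (η x - ⟪u x, z⟫) * ⟪u x, w⟫ ∂μ

theorem descentRate_smul (t : ℝ) (w : E) :
    descentRate μ u η φ z (t • w) = t * descentRate μ u η φ z w := by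
  simp only [descentRate, real_inner_smul_right, mul_left_comm _ t, integral_const_mul]

theorem descentRate_neg (w : E) : descentRate μ u η φ z (-w) = -descentRate μ u η φ z w := by
  simp only [descentRate, inner_neg_right, mul_neg, integral_neg]

theorem descentRate_congr (h : ∀ x, φ (η x - ⟪u x, z⟫) = χ (η x - ⟪u x, z⟫)) (w : E) :
    descentRate μ u η φ z w = descentRate μ u η χ z w := by
  simp only [descentRate, h]

end MeasurableSpace

variable [TopologicalSpace X]

theorem eventually_forall_lt_sub_inner (hu : Continuous u) (hη : Continuous η) {s : Set X}
    (hs : IsCompact s) {c : ℝ} (hc : ∀ x ∈ s, c < η x - ⟪u x, z⟫) :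
    ∀ᶠ y in 𝓝 z, ∀ x ∈ s, c < η x - ⟪u x, y⟫ := by
  refine hs.eventually_forall_of_forall_eventually fun x hx => ?_
  have hcont : Continuous fun p : E × X => η p.2 - ⟪u p.2, p.1⟫ := by fun_prop
  exact hcont.continuousAt.eventually (lt_mem_nhds (hc x hx))

theorem continuous_comp_sub_inner (hφ : ContinuousOn φ (Ioi 0)) (hu : Continuous u)
    (hη : Continuous η) (hz : ∀ x, 0 < η x - ⟪u x, z⟫) :
    Continuous fun x => φ (η x - ⟪u x, z⟫) :=
  hφ.comp_continuous (by fun_prop) hz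

variable [CompactSpace X] [MeasurableSpace X] [BorelSpace X] {μ : Measure X} [IsFiniteMeasure μ]

theorem integrable_descentRate (hu : Continuous u)
    (hφ : Continuous fun x => φ (η x - ⟪u x, z⟫)) (w : E) :
    Integrable (fun x => φ (η x - ⟪u x, z⟫) * ⟪u x, w⟫) μ :=
  integrable_of_continuous (hφ.mul (by fun_prop))

theorem descentRate_sum_smul {ι : Type*} (s : Finset ι) (hu : Continuous u)
    (hφ : Continuous fun x => φ (η x - ⟪u x, z⟫)) (a : ι → ℝ) (e : ι → E) :
    descentRate μ u η φ z (∑ i ∈ s, a i • e i) =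
      ∑ i ∈ s, a i * descentRate μ u η φ z (e i) := by
  simp only [← descentRate_smul]
  simp only [descentRate, inner_sum, Finset.mul_sum]
  exact integral_finsetSum s fun i _ => integrable_descentRate hu hφ (a i • e i)

theorem continuous_descentRate [FiniteDimensional ℝ E] (hu : Continuous u) (hη : Continuous η)
    (hφ : Continuous φ) (w : E) : Continuous fun z => descentRate μ u η φ z w :=
  continuous_integral_of_continuous (by fun_prop)

theorem descentRate_mono (hu : Continuous u) (hη : Continuous η) (hφ : Continuous φ)
    (hχ : Continuous χ) (h : ∀ x, φ (η x - ⟪u x, z⟫) * ⟪u x, w⟫ ≤ χ (η x - ⟪u x, z⟫) * ⟪u x, w⟫) :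
    descentRate μ u η φ z w ≤ descentRate μ u η χ z w :=
  integral_mono (integrable_descentRate hu (by fun_prop) w)
    (integrable_descentRate hu (by fun_prop) w) h

theorem descentRate_sub_lt [μ.IsOpenPosMeasure] (hφc : ContinuousOn φ (Ioi 0))
    (hφ : StrictMonoOn φ (Ioi 0)) (hu : Continuous u) (hη : Continuous η)
    (hz : ∀ x, 0 < η x - ⟪u x, z⟫) (hw : ∀ x, 0 < η x - ⟪u x, w⟫) {x₀ : X}
    (hx₀ : ⟪u x₀, w - z⟫ ≠ 0) :
    descentRate μ u η φ w (w - z) < descentRate μ u η φ z (w - z) := by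
  have hcz := continuous_comp_sub_inner hφc hu hη hz
  have hcw := continuous_comp_sub_inner hφc hu hη hw
  have hinner : ∀ x, ⟪u x, w - z⟫ = (η x - ⟪u x, z⟫) - (η x - ⟪u x, w⟫) := fun x => by
    rw [inner_sub_right]
    ring
  have hpos : 0 < ∫ x, (φ (η x - ⟪u x, z⟫) - φ (η x - ⟪u x, w⟫)) * ⟪u x, w - z⟫ ∂μ := by
    refine integral_pos_of_continuous ((hcz.sub hcw).mul (by fun_prop)) (fun x => ?_) (x := x₀) ?_
    · rw [hinner]
      rcases le_total (η x - ⟪u x, z⟫) (η x - ⟪u x, w⟫) with h | h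
      · exact mul_nonneg_of_nonpos_of_nonpos
          (sub_nonpos.2 (hφ.monotoneOn (hz x) (hw x) h)) (sub_nonpos.2 h)
      · exact mul_nonneg (sub_nonneg.2 (hφ.monotoneOn (hw x) (hz x) h)) (sub_nonneg.2 h)
    · rw [hinner] at hx₀ ⊢
      rcases (sub_ne_zero.1 hx₀).lt_or_gt with h | h
      · exact mul_pos_of_neg_of_neg (sub_neg.2 (hφ (hz x₀) (hw x₀) h)) (sub_neg.2 h)
      · exact mul_pos (sub_pos.2 (hφ (hw x₀) (hz x₀) h)) (sub_pos.2 h)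
  simp only [sub_mul] at hpos
  rwa [integral_sub (integrable_descentRate hu hcz _) (integrable_descentRate hu hcw _),
    sub_pos] at hpos

theorem exists_forall_descentRate_sub_nonpos [FiniteDimensional ℝ E] (hu : Continuous u)
    (hη : Continuous η) (hχc : Continuous χ) (hχ : Monotone χ) {B : Set E} (hB : IsCompact B)
    (hBconv : Convex ℝ B) (hBne : B.Nonempty) :
    ∃ z ∈ B, ∀ w ∈ B, descentRate μ u η χ z (w - z) ≤ 0 := by
  let Φ : ℝ → ℝ := fun a => ∫ x in 0..a, χ x
  have hΦ : Continuous Φ := intervalIntegral.continuous_primitive (fun _ _ =>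
    hχc.intervalIntegrable _ _) 0
  have htangent : ∀ a b, Φ a - Φ b ≤ χ a * (a - b) := fun a b => by
    rw [intervalIntegral.integral_interval_sub_left (hχc.intervalIntegrable _ _)
      (hχc.intervalIntegrable _ _)]
    exact intervalIntegral_le_mul_sub_of_monotone hχ a b
  let F : E → ℝ := fun z => ∫ x, Φ (η x - ⟪u x, z⟫) ∂μ
  have hF : Continuous F := continuous_integral_of_continuous (by fun_prop)
  have hdescent : ∀ y z, F y - F z ≤ -descentRate μ u η χ y (y - z) := fun y z => by
    simp only [F, descentRate]
    rw [← integral_sub (integrable_of_continuous (by fun_prop))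
      (integrable_of_continuous (by fun_prop)), ← integral_neg]
    refine integral_mono (integrable_of_continuous (by fun_prop))
      (integrable_of_continuous (by fun_prop)) fun x => (htangent _ _).trans_eq ?_
    simp only [inner_sub_right]
    ring
  obtain ⟨z, hzB, hz⟩ := hB.exists_isMinOn hBne hF.continuousOn
  refine ⟨z, hzB, fun w hwB => ?_⟩
  have hsegment : ∀ t ∈ Ioc (0 : ℝ) 1, descentRate μ u η χ (z + t • (w - z)) (w - z) ≤ 0 := by
    rintro t ⟨ht₀, ht₁⟩
    have hmin : F z ≤ F (z + t • (w - z)) :=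
      hz (hBconv.add_smul_sub_mem hzB hwB ⟨ht₀.le, ht₁⟩)
    have := hdescent (z + t • (w - z)) z
    rw [add_sub_cancel_left, descentRate_smul] at this
    nlinarith
  have hlim : Tendsto (fun t : ℝ => descentRate μ u η χ (z + t • (w - z)) (w - z)) (𝓝[>] 0)
      (𝓝 (descentRate μ u η χ z (w - z))) := by
    have hcont : Continuous fun t : ℝ => descentRate μ u η χ (z + t • (w - z)) (w - z) :=
      (continuous_descentRate hu hη hχc (w - z)).comp (by fun_prop)
    simpa using (hcont.tendsto 0).mono_left nhdsWithin_le_nhds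
  exact le_of_tendsto hlim (Filter.mem_of_superset (Ioc_mem_nhdsGT one_pos) hsegment)

end DescentRate

section FrozenSolution

open Filter Topology

variable {X E : Type*} [NormedAddCommGroup E] [InnerProductSpace ℝ E]
  {L : Submodule ℝ E} {u : X → E} {η : X → ℝ} {φ : ℝ → ℝ} {c : ℝ} {z v : E}

/-- The vectors `z` of `L` with `⟪u, z⟫ ≤ η`; for support data `u`, `η` of a convex body, the
section of the body by `L`. -/
def feasibleSet (L : Submodule ℝ E) (u : X → E) (η : X → ℝ) : Set E :=
  {z | z ∈ L ∧ ∀ x, ⟪u x, z⟫ ≤ η x}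

theorem convex_feasibleSet : Convex ℝ (feasibleSet L u η) := by
  have hinter : feasibleSet L u η = (L : Set E) ∩ ⋂ x, {z | ⟪u x, z⟫ ≤ η x} := by
    ext z
    simp [feasibleSet]
  rw [hinter]
  exact L.convex.inter (convex_iInter fun x => convex_halfSpace_le (innerₗ E (u x)).isLinear _)

/-- `z` solves the variational inequality on the feasible set for `φ` frozen below `c`. -/
def IsFrozenSolution [MeasurableSpace X] (μ : Measure X) (L : Submodule ℝ E) (u : X → E)
    (η : X → ℝ) (φ : ℝ → ℝ) (c : ℝ) (z : E) : Prop :=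
  z ∈ feasibleSet L u η ∧
    ∀ w ∈ feasibleSet L u η, descentRate μ u η (freezeBelow φ c) z (w - z) ≤ 0

variable [TopologicalSpace X] [CompactSpace X]

theorem exists_pos_add_smul_mem_feasibleSet (hu : Continuous u) (hη : Continuous η)
    (hz : z ∈ feasibleSet L u η) (hv : v ∈ L) (hpos : ∀ x, 0 ≤ ⟪u x, v⟫ → 0 < η x - ⟪u x, z⟫) :
    ∃ t : ℝ, 0 < t ∧ z + t • v ∈ feasibleSet L u η := by
  have hclosed : IsClosed {x | 0 ≤ ⟪u x, v⟫} := isClosed_le continuous_const (by fun_prop)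
  have hnhds := eventually_forall_lt_sub_inner hu hη hclosed.isCompact (z := z) hpos
  have hcont : Continuous fun t : ℝ => z + t • v := by fun_prop
  have hlim : Tendsto (fun t : ℝ => z + t • v) (𝓝[>] 0) (𝓝 z) := by
    simpa using (hcont.tendsto 0).mono_left nhdsWithin_le_nhds
  obtain ⟨t, hsmall, ht : 0 < t⟩ := ((hlim.eventually hnhds).and self_mem_nhdsWithin).exists
  refine ⟨t, ht, L.add_mem hz.1 (L.smul_mem t hv), fun x => ?_⟩
  rcases le_total 0 ⟪u x, v⟫ with hx | hx
  · exact (sub_pos.1 (hsmall x hx)).le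
  · rw [inner_add_right, real_inner_smul_right]
    linarith [hz.2 x, mul_nonpos_of_nonneg_of_nonpos ht.le hx]

variable [MeasurableSpace X] {μ : Measure X}

namespace IsFrozenSolution

theorem descentRate_nonpos (hz : IsFrozenSolution μ L u η φ c z) (hu : Continuous u)
    (hη : Continuous η) (hv : v ∈ L) (hpos : ∀ x, 0 ≤ ⟪u x, v⟫ → 0 < η x - ⟪u x, z⟫) :
    descentRate μ u η (freezeBelow φ c) z v ≤ 0 := by
  obtain ⟨t, ht, hmem⟩ := exists_pos_add_smul_mem_feasibleSet hu hη hz.1 hv hpos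
  have := hz.2 _ hmem
  rw [add_sub_cancel_left, descentRate_smul] at this
  exact nonpos_of_mul_nonpos_right this ht

theorem descentRate_eq_zero (hz : IsFrozenSolution μ L u η φ c z) (hu : Continuous u)
    (hη : Continuous η) (hc : 0 < c) (hdefect : ∀ x, c ≤ η x - ⟪u x, z⟫) (hv : v ∈ L) :
    descentRate μ u η φ z v = 0 := by
  have hpos : ∀ x, 0 < η x - ⟪u x, z⟫ := fun x => hc.trans_le (hdefect x)
  have hle : ∀ w ∈ L, descentRate μ u η φ z w ≤ 0 := fun w hw => by
    rw [← descentRate_congr (fun x => freezeBelow_of_le (hdefect x)) w]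
    exact hz.descentRate_nonpos hu hη hw fun x _ => hpos x
  refine le_antisymm (hle v hv) ?_
  have := hle (-v) (L.neg_mem hv)
  rwa [descentRate_neg, neg_nonpos] at this

variable [BorelSpace X] [IsFiniteMeasure μ]

theorem descentRate_freezeBelow_nonneg (hz : IsFrozenSolution μ L u η φ c z) (hu : Continuous u)
    (hη : Continuous η) (hφc : ContinuousOn φ (Ioi 0)) (hφ : MonotoneOn φ (Ioi 0)) (hc : 0 < c)
    {b : ℝ} (hcb : c ≤ b) (hv : v ∈ L) (hb : ∀ x, ⟪u x, v⟫ ≤ 0 → b < η x - ⟪u x, z⟫) :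
    0 ≤ descentRate μ u η (freezeBelow φ b) z v := by
  have hb₀ : 0 < b := hc.trans_le hcb
  calc
    0 ≤ descentRate μ u η (freezeBelow φ c) z v := by
      have := hz.descentRate_nonpos hu hη (L.neg_mem hv) fun x hx =>
        hb₀.trans (hb x (by rwa [inner_neg_right, neg_nonneg] at hx))
      rwa [descentRate_neg, neg_nonpos] at this
    _ ≤ descentRate μ u η (freezeBelow φ b) z v := by
      refine descentRate_mono hu hη (continuous_freezeBelow hφc hc)
        (continuous_freezeBelow hφc hb₀) fun x => ?_
      rcases le_total ⟪u x, v⟫ 0 with hx | hx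
      · rw [freezeBelow_of_le (hb x hx).le, freezeBelow_of_le (hcb.trans (hb x hx).le)]
      · exact mul_le_mul_of_nonneg_right (freezeBelow_le_freezeBelow hφ hc hcb _) hx

end IsFrozenSolution

variable [BorelSpace X] [IsFiniteMeasure μ] [FiniteDimensional ℝ E]

theorem exists_isFrozenSolution (hu : Continuous u) (hη : Continuous η)
    (hφc : ContinuousOn φ (Ioi 0)) (hφ : MonotoneOn φ (Ioi 0))
    (hcompact : IsCompact (feasibleSet L u η)) (hne : (feasibleSet L u η).Nonempty) (hc : 0 < c) :
    ∃ z, IsFrozenSolution μ L u η φ c z :=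
  exists_forall_descentRate_sub_nonpos hu hη (continuous_freezeBelow hφc hc)
    (monotone_freezeBelow hφ hc) hcompact convex_feasibleSet hne

theorem descentRate_freezeBelow_nonneg_of_tendsto (hu : Continuous u) (hη : Continuous η)
    (hφc : ContinuousOn φ (Ioi 0)) (hφ : MonotoneOn φ (Ioi 0)) {ε : ℕ → ℝ} {y : ℕ → E}
    (hy : ∀ k, IsFrozenSolution μ L u η φ (ε k) (y k)) (hε : ∀ k, 0 < ε k)
    (hε₀ : Tendsto ε atTop (𝓝 0)) (hyz : Tendsto y atTop (𝓝 z)) (hv : v ∈ L) (hc : 0 < c)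
    (hcz : ∀ x, ⟪u x, v⟫ ≤ 0 → c < η x - ⟪u x, z⟫) :
    0 ≤ descentRate μ u η (freezeBelow φ c) z v := by
  have hlim : Tendsto (fun k => descentRate μ u η (freezeBelow φ c) (y k) v) atTop
      (𝓝 (descentRate μ u η (freezeBelow φ c) z v)) :=
    ((continuous_descentRate hu hη (continuous_freezeBelow hφc hc) v).tendsto z).comp hyz
  have hclosed : IsClosed {x | ⟪u x, v⟫ ≤ 0} := isClosed_le (by fun_prop) continuous_const
  refine ge_of_tendsto hlim ?_
  filter_upwards [hε₀.eventually (ge_mem_nhds hc),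
    hyz.eventually (eventually_forall_lt_sub_inner hu hη hclosed.isCompact hcz)] with k hεk hyk
  exact (hy k).descentRate_freezeBelow_nonneg hu hη hφc hφ (hε k) hεk hv hyk

theorem exists_forall_pos_forall_descentRate_eq_zero (hu : Continuous u) (hη : Continuous η)
    (hφc : ContinuousOn φ (Ioi 0)) (hφ : MonotoneOn φ (Ioi 0))
    (hcompact : IsCompact (feasibleSet L u η)) (hne : (feasibleSet L u η).Nonempty)
    (hcontact : ∀ z ∈ feasibleSet L u η, (∃ x, ⟪u x, z⟫ = η x) → ∃ v ∈ L,
      (∀ x, ⟪u x, z⟫ = η x → 0 < ⟪u x, v⟫) ∧ ∀ c > 0, (∀ x, ⟪u x, v⟫ ≤ 0 → c < η x - ⟪u x, z⟫) →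
        descentRate μ u η (freezeBelow φ c) z v < 0) :
    ∃ z ∈ L, (∀ x, 0 < η x - ⟪u x, z⟫) ∧ ∀ v ∈ L, descentRate μ u η φ z v = 0 := by
  obtain ⟨ε, -, hε, hε₀⟩ := exists_seq_strictAnti_tendsto (0 : ℝ)
  choose y hy using fun k => exists_isFrozenSolution (μ := μ) hu hη hφc hφ hcompact hne (hε k)
  obtain ⟨z, hz, σ, hσ, hyz⟩ := hcompact.tendsto_subseq fun k => (hy k).1
  have hεσ : Tendsto (ε ∘ σ) atTop (𝓝 0) := hε₀.comp hσ.tendsto_atTop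
  have hdefect : Continuous fun x => η x - ⟪u x, z⟫ := by fun_prop
  have hpos : ∀ x, 0 < η x - ⟪u x, z⟫ := fun x => by
    by_contra! hx
    obtain ⟨v, hv, hinner, hneg⟩ := hcontact z hz ⟨x, (hz.2 x).antisymm (by linarith)⟩
    have hclosed : IsClosed {x | ⟪u x, v⟫ ≤ 0} := isClosed_le (by fun_prop) continuous_const
    obtain ⟨c, hc, hcz⟩ := hclosed.isCompact.exists_forall_le' hdefect.continuousOn (a := 0)
      fun x hx => sub_pos.2 ((hz.2 x).lt_of_ne fun h => (hinner x h).not_ge hx)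
    have hcz' : ∀ x, ⟪u x, v⟫ ≤ 0 → c / 2 < η x - ⟪u x, z⟫ := fun x hx =>
      (half_lt_self hc).trans_le (hcz x hx)
    exact (hneg (c / 2) (half_pos hc) hcz').not_ge <|
      descentRate_freezeBelow_nonneg_of_tendsto hu hη hφc hφ (fun k => hy (σ k))
        (fun k => hε (σ k)) hεσ hyz hv (half_pos hc) hcz'
  obtain ⟨c, hc, hcz⟩ := isCompact_univ.exists_forall_le' hdefect.continuousOn (a := 0)
    fun x _ => hpos x
  obtain ⟨k, hεk, hyk⟩ := ((hεσ.eventually (ge_mem_nhds (half_pos hc))).and (hyz.eventually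
    (eventually_forall_lt_sub_inner hu hη isCompact_univ fun x hx =>
      (half_lt_self hc).trans_le (hcz x hx)))).exists
  have hky : ∀ x, ε (σ k) ≤ η x - ⟪u x, y (σ k)⟫ := fun x => hεk.trans (hyk x trivial).le
  exact ⟨y (σ k), (hy (σ k)).1.1, fun x => (hε (σ k)).trans_le (hky x), fun v hv =>
    (hy (σ k)).descentRate_eq_zero hu hη (hε (σ k)) hky hv⟩

end FrozenSolution

section GreatCircle

theorem hasDerivAt_cos_smul_add_sin_smul {E : Type*} [NormedAddCommGroup E] [NormedSpace ℝ E]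
    (x y : E) (t : ℝ) :
    HasDerivAt (fun t => cos t • x + sin t • y) (cos t • y + sin t • -x) t :=
  (((hasDerivAt_cos t).smul_const x).add ((hasDerivAt_sin t).smul_const y)).congr_deriv
    (by module)

theorem fderiv_self_of_homogeneous {E : Type*} [NormedAddCommGroup E] [NormedSpace ℝ E]
    {G : E → ℝ} {u : E} (hG : DifferentiableAt ℝ G u)
    (hhom : ∀ l : ℝ, 0 < l → G (l • u) = l * G u) :
    fderiv ℝ G u u = G u := by
  have hray : HasDerivAt (fun l : ℝ => l • u) u 1 := by
    simpa using (hasDerivAt_id (1 : ℝ)).smul_const u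
  have hcomp : HasDerivAt (fun l : ℝ => G (l • u)) (fderiv ℝ G u u) 1 :=
    HasFDerivAt.comp_hasDerivAt 1 (by simpa using hG.hasFDerivAt) hray
  have hlin : HasDerivAt (fun l : ℝ => l * G u) (G u) 1 := by
    simpa using (hasDerivAt_id (1 : ℝ)).mul_const (G u)
  refine hcomp.unique (hlin.congr_of_eventuallyEq ?_)
  filter_upwards [lt_mem_nhds one_pos] with l hl using hhom l hl

theorem sin_le_sin_sub_add_sin {T t : ℝ} (hT : T ≤ π) (ht : t ∈ Icc 0 T) :
    sin T ≤ sin (T - t) + sin t := by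
  have hsplit : sin T = sin (T - t) * cos t + cos (T - t) * sin t := by
    rw [← sin_add, sub_add_cancel]
  have hsin : 0 ≤ sin t := sin_nonneg_of_nonneg_of_le_pi ht.1 (ht.2.trans hT)
  have hsin_sub : 0 ≤ sin (T - t) :=
    sin_nonneg_of_nonneg_of_le_pi (by linarith [ht.2]) (by linarith [ht.1])
  nlinarith [cos_le_one t, cos_le_one (T - t)]

theorem norm_sin_sub_smul_add_sin_smul {E : Type*} [NormedAddCommGroup E] [InnerProductSpace ℝ E]
    {u w : E} (hu : ‖u‖ = 1) (hw : ‖w‖ = 1) {T : ℝ} (hT : cos T = ⟪u, w⟫) (t : ℝ) :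
    ‖sin (T - t) • u + sin t • w‖ = |sin T| := by
  rw [← sq_eq_sq₀ (norm_nonneg _) (abs_nonneg _), norm_add_sq_real, norm_smul, norm_smul,
    real_inner_smul_left, real_inner_smul_right, hu, hw, ← hT, sin_sub]
  simp only [Real.norm_eq_abs, mul_one, sq_abs]
  linear_combination sin T ^ 2 * sin_sq_add_cos_sq t - sin t ^ 2 * sin_sq_add_cos_sq T

end GreatCircle

section Cap

variable {n : ℕ} {θ : ℝ}

@[simp]
theorem inner_Etop (x : V n) : ⟪x, Etop n⟫ = x (Fin.last n) := by
  simp [Etop, EuclideanSpace.inner_single_right]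

@[simp]
theorem Etop_apply_last : Etop n (Fin.last n) = 1 := by simp [Etop]

@[simp]
theorem norm_Etop : ‖Etop n‖ = 1 := by simp [Etop]

@[simp]
theorem inner_Etop_left (x : V n) : ⟪Etop n, x⟫ = x (Fin.last n) := by
  rw [real_inner_comm, inner_Etop]

theorem cos_nonneg_of_mem_Ioc (hθ : θ ∈ Ioc 0 (π / 2)) : 0 ≤ cos θ :=
  cos_nonneg_of_mem_Icc ⟨by linarith [hθ.1, pi_pos], hθ.2⟩

theorem sin_pos_of_mem_Ioc (hθ : θ ∈ Ioc 0 (π / 2)) : 0 < sin θ :=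
  sin_pos_of_pos_of_lt_pi hθ.1 (by linarith [hθ.2, pi_pos])

theorem Etop_mem_sphCap : Etop n ∈ sphCap n θ := by
  simp [sphCap, cos_le_one]

theorem norm_sq_eq_horizontal_add_sq (x : V n) :
    ‖x‖ ^ 2 = ‖x - x (Fin.last n) • Etop n‖ ^ 2 + x (Fin.last n) ^ 2 := by
  rw [norm_sub_sq_real, real_inner_smul_right, inner_Etop, norm_smul, norm_Etop, mul_one,
    Real.norm_eq_abs, sq_abs]
  ring

theorem smul_add_mem_sphCapBdry {e : V n} (he : ‖e‖ = 1) (hlast : e (Fin.last n) = 0) :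
    sin θ • e + cos θ • Etop n ∈ sphCapBdry n θ := by
  refine ⟨?_, by simp [hlast]⟩
  rw [← sq_eq_sq₀ (norm_nonneg _) zero_le_one, norm_add_sq_real]
  simp [norm_smul, he, inner_smul_left, inner_smul_right, hlast, sq_abs]

theorem exists_horizontal_unit (hn : 1 ≤ n) (u : V n) :
    ∃ e : V n, ‖e‖ = 1 ∧ e (Fin.last n) = 0 ∧ ∃ r : ℝ, 0 ≤ r ∧
      u = r • e + u (Fin.last n) • Etop n := by
  set p := u - u (Fin.last n) • Etop n with hp
  have hplast : p (Fin.last n) = 0 := by simp [hp]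
  rcases eq_or_ne p 0 with hp₀ | hp₀
  · have hlast : Fin.last n ≠ 0 := by simpa [Fin.ext_iff] using Nat.ne_of_gt hn
    exact ⟨EuclideanSpace.single 0 1, by simp, by simp [hlast], 0, le_rfl, by
      rw [zero_smul, zero_add, ← sub_eq_zero, ← hp, hp₀]⟩
  · have hnorm : ‖p‖ ≠ 0 := norm_ne_zero_iff.2 hp₀
    refine ⟨‖p‖⁻¹ • p, norm_smul_inv_norm hp₀, by simp [hplast], ‖p‖, norm_nonneg _, ?_⟩
    rw [smul_inv_smul₀ hnorm, hp, sub_add_cancel]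

theorem exists_meridian_mem_sphCapBdry (hn : 1 ≤ n) (hθ : θ ∈ Ioc 0 (π / 2)) {u : V n}
    (hu : ‖u‖ = 1) (hlt : cos θ < u (Fin.last n)) :
    ∃ w ∈ sphCapBdry n θ, ∃ r : ℝ, 0 ≤ r ∧ ∃ β : ℝ, 0 < β ∧ sin θ • u = r • w + β • Etop n := by
  have hcos := cos_nonneg_of_mem_Ioc hθ
  have hsin := sin_pos_of_mem_Ioc hθ
  obtain ⟨e, he, hlast, r, hr, hue⟩ := exists_horizontal_unit hn u
  set b := u (Fin.last n) with hb
  have hrb : 1 = r ^ 2 + b ^ 2 := by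
    have := norm_sq_eq_horizontal_add_sq u
    rwa [← hb, sub_eq_of_eq_add hue, hu, norm_smul, he, Real.norm_of_nonneg hr, mul_one,
      one_pow] at this
  have hrsin : r ≤ sin θ := by nlinarith [sin_sq_add_cos_sq θ]
  refine ⟨_, smul_add_mem_sphCapBdry he hlast, r, hr, sin θ * b - r * cos θ, by nlinarith, ?_⟩
  rw [hue]
  module

theorem slerp_mem_sphCap (hθ : 0 ≤ cos θ) {u w : V n} (hu : u ∈ sphCap n θ)
    (hw : w ∈ sphCap n θ) {T t : ℝ} (hT : cos T = ⟪u, w⟫) (hs : 0 < sin T) (hTπ : T ≤ π)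
    (ht : t ∈ Icc 0 T) :
    cos t • u + sin t • ((sin T)⁻¹ • (w - cos T • u)) ∈ sphCap n θ := by
  have hst : 0 ≤ sin t := sin_nonneg_of_nonneg_of_le_pi ht.1 (ht.2.trans hTπ)
  have hsTt : 0 ≤ sin (T - t) :=
    sin_nonneg_of_nonneg_of_le_pi (by linarith [ht.2]) (by linarith [ht.1])
  have hslerp : cos t • u + sin t • ((sin T)⁻¹ • (w - cos T • u)) =
      (sin T)⁻¹ • (sin (T - t) • u + sin t • w) := by
    rw [sin_sub]
    match_scalars
    · field_simp
      ring
    · ring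
  rw [hslerp]
  constructor
  · rw [norm_smul, norm_sin_sub_smul_add_sin_smul hu.1 hw.1 hT, norm_inv, Real.norm_eq_abs,
      inv_mul_cancel₀ (abs_pos.2 hs.ne').ne']
  · simp only [PiLp.smul_apply, PiLp.add_apply, smul_eq_mul]
    rw [inv_mul_eq_div, le_div_iff₀ hs]
    nlinarith [mul_le_mul_of_nonneg_left hu.2 hsTt, mul_le_mul_of_nonneg_left hw.2 hst,
      mul_le_mul_of_nonneg_left (sin_le_sin_sub_add_sin hTπ ht) hθ]

theorem exists_arc_of_mem_sphCap (hθ : 0 ≤ cos θ) {u w : V n} (hu : u ∈ sphCap n θ)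
    (hw : w ∈ sphCap n θ) :
    ∃ T ∈ Icc 0 π, ∃ e, cos T • u + sin T • e = w ∧
      ∀ t ∈ Icc 0 T, cos t • u + sin t • e ∈ sphCap n θ := by
  rcases eq_or_ne w u with rfl | hwu
  · refine ⟨0, ⟨le_rfl, pi_pos.le⟩, 0, by simp, fun t ht => ?_⟩
    obtain rfl : t = 0 := le_antisymm ht.2 ht.1
    simpa using hu
  rcases eq_or_ne w (-u) with rfl | hwu'
  -- Antipodal points lie in the cap only if it is the half sphere and they lie on its equator.
  · have hwlast : cos θ ≤ -u (Fin.last n) := hw.2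
    have hθ₀ : cos θ = 0 := by linarith [hu.2]
    have hlast : u (Fin.last n) = 0 := by linarith [hu.2]
    refine ⟨π, ⟨pi_pos.le, le_rfl⟩, Etop n, by simp, fun t ht => ⟨?_, ?_⟩⟩
    · rw [← sq_eq_sq₀ (norm_nonneg _) zero_le_one, norm_add_sq_real]
      simp [norm_smul, hu.1, inner_smul_left, inner_smul_right, hlast, sq_abs]
    · simpa [hlast, hθ₀] using sin_nonneg_of_nonneg_of_le_pi ht.1 ht.2
  · have hlt : ⟪u, w⟫ < 1 := (inner_lt_one_iff_real_of_norm_eq_one hu.1 hw.1).2 hwu.symm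
    have hgt : -1 < ⟪u, w⟫ := by
      have := (inner_lt_one_iff_real_of_norm_eq_one hu.1 ((norm_neg w).trans hw.1)).2
        fun h => hwu' (by rw [h, neg_neg])
      rw [inner_neg_right] at this
      linarith
    have hcos : cos (arccos ⟪u, w⟫) = ⟪u, w⟫ := cos_arccos hgt.le hlt.le
    have hsin : 0 < sin (arccos ⟪u, w⟫) :=
      sin_pos_of_pos_of_lt_pi (arccos_pos.2 hlt) (arccos_lt_pi.2 hgt)
    refine ⟨arccos ⟪u, w⟫, ⟨arccos_nonneg _, arccos_le_pi _⟩, _, ?_, fun t ht =>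
      slerp_mem_sphCap hθ hu hw hcos hsin (arccos_le_pi _) ht⟩
    rw [smul_inv_smul₀ hsin.ne', add_sub_cancel]

end Cap

section Gradient

variable {n : ℕ} {θ : ℝ} {m : ℕ∞} {h H : V n → ℝ} {u w : V n}

theorem sphCap_subset_coneCap : sphCap n θ ⊆ coneCap n θ :=
  fun u hu => ⟨1, one_pos, u, hu, (one_smul ℝ u).symm⟩

namespace IsHomExt

theorem of_le (hext : IsHomExt n θ m h H) {k : ℕ∞} (hk : k ≤ m) : IsHomExt n θ k h H := by
  obtain ⟨⟨U, hU, hcone, hH⟩, hhom⟩ := hext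
  exact ⟨⟨U, hU, hcone, hH.of_le (by exact_mod_cast hk)⟩, hhom⟩

theorem contDiffAt (hext : IsHomExt n θ m h H) (hu : u ∈ sphCap n θ) : ContDiffAt ℝ m H u := by
  obtain ⟨⟨U, hU, hcone, hH⟩, -⟩ := hext
  exact hH.contDiffAt (hU.mem_nhds (hcone (sphCap_subset_coneCap hu)))

theorem continuousOn (hext : IsHomExt n θ m h H) : ContinuousOn H (sphCap n θ) :=
  fun _ hu => (hext.contDiffAt hu).continuousAt.continuousWithinAt

theorem differentiableAt (hext : IsHomExt n θ m h H) (hm : m ≠ 0) (hu : u ∈ sphCap n θ) :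
    DifferentiableAt ℝ H u :=
  (hext.contDiffAt hu).differentiableAt (by exact_mod_cast hm)

theorem differentiableAt_fderiv (hext : IsHomExt n θ 2 h H) (hu : u ∈ sphCap n θ) :
    DifferentiableAt ℝ (fderiv ℝ H) u :=
  ((hext.contDiffAt hu).fderiv_right (m := 1) (by norm_num)).differentiableAt one_ne_zero

theorem fderiv_self (hext : IsHomExt n θ m h H) (hm : m ≠ 0) (hu : u ∈ sphCap n θ) :
    fderiv ℝ H u u = H u :=
  fderiv_self_of_homogeneous (hext.differentiableAt hm hu) fun l hl => hext.2.1 l hl u hu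

theorem fderiv_arc_le (hext : IsHomExt n θ 2 h H) (hτ : TauNonneg n θ H) {e : V n} {T : ℝ}
    (hT : T ∈ Icc 0 π) (harc : ∀ t ∈ Icc 0 T, cos t • u + sin t • e ∈ sphCap n θ) :
    fderiv ℝ H u (cos T • u + sin T • e) ≤ H (cos T • u + sin T • e) := by
  let γ : ℝ → V n := fun t => cos t • u + sin t • e
  let γ' : ℝ → V n := fun t => cos t • e + sin t • -u
  have hγ : ∀ t, HasDerivAt γ (γ' t) t := hasDerivAt_cos_smul_add_sin_smul u e
  have hγ' : ∀ t, HasDerivAt γ' (-γ t) t := fun t =>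
    (hasDerivAt_cos_smul_add_sin_smul e (-u) t).congr_deriv (by module)
  have hu : u ∈ sphCap n θ := by simpa using harc 0 (left_mem_Icc.2 hT.1)
  have hH : ∀ t ∈ Icc 0 T, HasDerivAt (fun t => H (γ t)) (fderiv ℝ H (γ t) (γ' t)) t :=
    fun t ht =>
      (hext.differentiableAt two_ne_zero (harc t ht)).hasFDerivAt.comp_hasDerivAt t (hγ t)
  have hH' : ∀ t ∈ Icc 0 T, HasDerivAt (fun t => fderiv ℝ H (γ t) (γ' t))
      (hessQ n H (γ t) (γ' t) (γ' t) - H (γ t)) t := fun t ht => by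
    have hgrad : HasDerivAt (fun t => fderiv ℝ H (γ t)) (fderiv ℝ (fderiv ℝ H) (γ t) (γ' t)) t :=
      (hext.differentiableAt_fderiv (harc t ht)).hasFDerivAt.comp_hasDerivAt t (hγ t)
    refine (hgrad.clm_apply (hγ' t)).congr_deriv ?_
    rw [map_neg, hext.fderiv_self two_ne_zero (harc t ht), hessQ, sub_eq_add_neg]
  have hcomp := cos_mul_add_sin_mul_le hT hH hH' fun t ht => by
    rw [sub_add_cancel]
    exact hτ _ (harc t ht) _
  rw [map_add, map_smul, map_smul, hext.fderiv_self two_ne_zero hu]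
  simpa [γ, γ'] using hcomp

theorem fderiv_le (hext : IsHomExt n θ 2 h H) (hτ : TauNonneg n θ H) (hθ : 0 ≤ cos θ)
    (hu : u ∈ sphCap n θ) (hw : w ∈ sphCap n θ) : fderiv ℝ H u w ≤ H w := by
  obtain ⟨T, hT, e, rfl, harc⟩ := exists_arc_of_mem_sphCap hθ hu hw
  exact hext.fderiv_arc_le hτ hT harc

theorem fderiv_Etop_nonneg (hext : IsHomExt n θ 2 h H)
    (hbdry : ∀ w ∈ sphCapBdry n θ, 0 ≤ fderiv ℝ H w (Etop n)) (hτ : TauNonneg n θ H) (hn : 1 ≤ n)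
    (hθ : θ ∈ Ioc 0 (π / 2)) (hu : u ∈ sphCap n θ) : 0 ≤ fderiv ℝ H u (Etop n) := by
  have hcos := cos_nonneg_of_mem_Ioc hθ
  have hsin := sin_pos_of_mem_Ioc hθ
  rcases hu.2.eq_or_lt with heq | hlt
  · exact hbdry u ⟨hu.1, heq.symm⟩
  obtain ⟨w, hwb, r, hr, β, hβ, huw⟩ := exists_meridian_mem_sphCapBdry hn hθ hu.1 hlt
  have hwcap : w ∈ sphCap n θ := ⟨hwb.1, hwb.2.ge⟩
  have hlower : r * H w ≤ sin θ * H u := by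
    calc
      r * H w = fderiv ℝ H w (r • w) := by
        rw [map_smul, hext.fderiv_self two_ne_zero hwcap, smul_eq_mul]
      _ ≤ fderiv ℝ H w (r • w + β • Etop n) := by
        rw [map_add, map_smul _ β, le_add_iff_nonneg_right]
        exact mul_nonneg hβ.le (hbdry w hwb)
      _ = sin θ * fderiv ℝ H w u := by rw [← huw, map_smul, smul_eq_mul]
      _ ≤ sin θ * H u := mul_le_mul_of_nonneg_left (hext.fderiv_le hτ hcos hwcap hu) hsin.le
  have hupper : sin θ * H u ≤ r * H w + β * fderiv ℝ H u (Etop n) := by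
    calc
      sin θ * H u = r * fderiv ℝ H u w + β * fderiv ℝ H u (Etop n) := by
        rw [← hext.fderiv_self two_ne_zero hu, ← smul_eq_mul, ← map_smul, huw, map_add,
          map_smul, map_smul, smul_eq_mul, smul_eq_mul]
      _ ≤ r * H w + β * fderiv ℝ H u (Etop n) := by
        gcongr
        exact hext.fderiv_le hτ hcos hu hwcap
  exact nonneg_of_mul_nonneg_right (by linarith) hβ

end IsHomExt

end Gradient

section WulffShape

variable {n : ℕ} {θ : ℝ} {H : V n → ℝ}

theorem isCompact_sphCap : IsCompact (sphCap n θ) := by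
  have hcap : sphCap n θ = Metric.sphere 0 1 ∩ {u | cos θ ≤ u (Fin.last n)} := by
    ext u
    simp [sphCap]
  rw [hcap]
  exact (isCompact_sphere 0 1).inter_right (isClosed_le continuous_const (by fun_prop))

theorem inner_le_norm_of_mem_sphCap {u : V n} (hu : u ∈ sphCap n θ) (y : V n) : ⟪u, y⟫ ≤ ‖y‖ := by
  simpa [hu.1] using real_inner_le_norm u y

/-- The Wulff shape of `H` over the cap: the largest subset of the upper half space whose support
function is at most `H` on `S^n_θ`. -/
def wulffShape (n : ℕ) (θ : ℝ) (H : V n → ℝ) : Set (V n) :=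
  {y | 0 ≤ y (Fin.last n) ∧ ∀ u ∈ sphCap n θ, ⟪u, y⟫ ≤ H u}

theorem wulffShape_eq_inter :
    wulffShape n θ H = {y | 0 ≤ y (Fin.last n)} ∩ ⋂ u ∈ sphCap n θ, {y | ⟪u, y⟫ ≤ H u} := by
  ext y
  simp [wulffShape]

theorem convex_wulffShape : Convex ℝ (wulffShape n θ H) := by
  rw [wulffShape_eq_inter]
  refine Convex.inter ?_ (convex_iInter₂ fun u _ =>
    convex_halfSpace_le (innerₛₗ ℝ u).isLinear (H u))
  simpa using convex_halfSpace_ge (innerₛₗ ℝ (Etop n)).isLinear 0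

theorem isClosed_wulffShape : IsClosed (wulffShape n θ H) := by
  rw [wulffShape_eq_inter]
  exact (isClosed_le continuous_const (by fun_prop)).inter
    (isClosed_biInter fun u _ => isClosed_le (by fun_prop) continuous_const)

theorem norm_le_of_mem_wulffShape (hn : 1 ≤ n) (hθ : θ ∈ Ioc 0 (π / 2)) {M : ℝ}
    (hM : ∀ u ∈ sphCap n θ, H u ≤ M) {y : V n} (hy : y ∈ wulffShape n θ H) :
    ‖y‖ ≤ M / sin θ + M := by
  obtain ⟨e, he, helast, r, hr, hye⟩ := exists_horizontal_unit hn y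
  have hbdry := smul_add_mem_sphCapBdry (θ := θ) he helast
  have hlast : y (Fin.last n) ≤ M := by
    simpa using (hy.2 _ Etop_mem_sphCap).trans (hM _ Etop_mem_sphCap)
  have her : ⟪e, y⟫ = r := by
    rw [hye]
    simp [inner_add_right, inner_smul_right, he, helast]
  have hside : sin θ * r + cos θ * y (Fin.last n) ≤ M := by
    have hcap : sin θ • e + cos θ • Etop n ∈ sphCap n θ := ⟨hbdry.1, hbdry.2.ge⟩
    simpa [inner_add_left, inner_smul_left, her] using (hy.2 _ hcap).trans (hM _ hcap)
  have hrM : r ≤ M / sin θ := by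
    rw [le_div_iff₀ (sin_pos_of_mem_Ioc hθ)]
    nlinarith [mul_nonneg (cos_nonneg_of_mem_Ioc hθ) hy.1]
  calc ‖y‖ = ‖r • e + y (Fin.last n) • Etop n‖ := by rw [← hye]
    _ ≤ ‖r • e‖ + ‖y (Fin.last n) • Etop n‖ := norm_add_le _ _
    _ = r + y (Fin.last n) := by
      simp [norm_smul, he, Real.norm_of_nonneg hr, Real.norm_of_nonneg hy.1, -norm_eq_abs]
    _ ≤ M / sin θ + M := add_le_add hrM hlast

theorem isCompact_wulffShape (hn : 1 ≤ n) (hθ : θ ∈ Ioc 0 (π / 2))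
    (hH : ContinuousOn H (sphCap n θ)) : IsCompact (wulffShape n θ H) := by
  obtain ⟨M, hM⟩ := isCompact_sphCap.bddAbove_image hH
  exact Metric.isCompact_of_isClosed_isBounded isClosed_wulffShape <|
    isBounded_iff_forall_norm_le.2 ⟨M / sin θ + M, fun y =>
      norm_le_of_mem_wulffShape hn hθ fun u hu => hM (mem_image_of_mem _ hu)⟩

theorem interior_wulffShape_nonempty (hH : ContinuousOn H (sphCap n θ))
    (hpos : ∀ u ∈ sphCap n θ, 0 < H u) : (interior (wulffShape n θ H)).Nonempty := by
  obtain ⟨m, hm, hle⟩ := isCompact_sphCap.exists_forall_le' hH hpos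
  refine ⟨(m / 2) • Etop n, mem_interior.2
    ⟨{y | 0 < y (Fin.last n)} ∩ Metric.ball 0 m, fun y hy => ⟨le_of_lt hy.1, fun u hu => ?_⟩,
      (isOpen_lt continuous_const (by fun_prop)).inter Metric.isOpen_ball, ?_, ?_⟩⟩
  · exact (inner_le_norm_of_mem_sphCap hu y).trans ((mem_ball_zero_iff.1 hy.2).le.trans (hle u hu))
  · simpa using hm
  · simpa [norm_smul, abs_of_pos hm] using half_lt_self hm

theorem mem_relintBase_wulffShape_iff (hn : 1 ≤ n) (hH : ContinuousOn H (sphCap n θ))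
    (hpos : ∀ u ∈ sphCap n θ, 0 < H u) {z : V n} :
    z ∈ relintBase n (wulffShape n θ H) ↔
      z (Fin.last n) = 0 ∧ ∀ u ∈ sphCap n θ, 0 < H u - ⟪u, z⟫ := by
  constructor
  · rintro ⟨hz, ε, hε, hball⟩
    refine ⟨hz, fun u hu => ?_⟩
    obtain ⟨e, he, helast, r, hr, hue⟩ := exists_horizontal_unit hn u
    have hmem : z + (ε / 2) • e ∈ wulffShape n θ H :=
      hball _ (by simp [hz, helast]) (by simpa [norm_smul, he, abs_of_pos hε] using half_lt_self hε)
    have her : ⟪u, e⟫ = r := by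
      rw [hue]
      simp [inner_add_left, inner_smul_left, he, helast]
    have hle : ⟪u, z⟫ + ε / 2 * r ≤ H u := by
      simpa [inner_add_right, inner_smul_right, her] using hmem.2 u hu
    rcases hr.eq_or_lt with rfl | hr
    · have huz : ⟪u, z⟫ = 0 := by
        rw [hue]
        simp [inner_smul_left, hz]
      simpa [huz] using hpos u hu
    · linarith [mul_pos (half_pos hε) hr]
  · rintro ⟨hz, hlt⟩
    obtain ⟨m, hm, hle⟩ := isCompact_sphCap.exists_forall_le' (f := fun u => H u - ⟪u, z⟫)
      (hH.sub (by fun_prop)) hlt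
    refine ⟨hz, m, hm, fun y hy hym => ⟨hy.ge, fun u hu => ?_⟩⟩
    have hsub := inner_le_norm_of_mem_sphCap hu (y - z)
    rw [inner_sub_right] at hsub
    linarith [hle u hu]

theorem IsHomExt.exists_mem_wulffShape_inner_eq {h : V n → ℝ} (hext : IsHomExt n θ 2 h H)
    (hbdry : ∀ w ∈ sphCapBdry n θ, 0 ≤ fderiv ℝ H w (Etop n)) (hτ : TauNonneg n θ H) (hn : 1 ≤ n)
    (hθ : θ ∈ Ioc 0 (π / 2)) {u : V n} (hu : u ∈ sphCap n θ) :
    ∃ y ∈ wulffShape n θ H, ⟪u, y⟫ = H u := by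
  refine ⟨(InnerProductSpace.toDual ℝ (V n)).symm (fderiv ℝ H u), ⟨?_, fun w hw => ?_⟩, ?_⟩
  · rw [← inner_Etop, InnerProductSpace.toDual_symm_apply]
    exact hext.fderiv_Etop_nonneg hbdry hτ hn hθ hu
  · rw [real_inner_comm, InnerProductSpace.toDual_symm_apply]
    exact hext.fderiv_le hτ (cos_nonneg_of_mem_Ioc hθ) hu hw
  · rw [real_inner_comm, InnerProductSpace.toDual_symm_apply, hext.fderiv_self two_ne_zero hu]

theorem suppFn_wulffShape {u : V n} (hu : u ∈ sphCap n θ)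
    (hy : ∃ y ∈ wulffShape n θ H, ⟪u, y⟫ = H u) : suppFn n (wulffShape n θ H) u = H u := by
  obtain ⟨y, hy, hyu⟩ := hy
  exact IsGreatest.csSup_eq ⟨⟨y, hy, hyu⟩, forall_mem_image.2 fun x hx => hx.2 u hu⟩

end WulffShape

section CapMeasure

open Filter Metric Module Topology

variable {n : ℕ} {θ : ℝ}

instance : CompactSpace (sphCap n θ) :=
  isCompact_iff_compactSpace.1 isCompact_sphCap

theorem continuous_comp_coe_sphCap {H : V n → ℝ} (hH : ContinuousOn H (sphCap n θ)) :
    Continuous fun u : sphCap n θ => H u :=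
  hH.comp_continuous continuous_subtype_val Subtype.prop

instance : Fact (finrank ℝ (V n) = n + 1) :=
  ⟨finrank_euclideanSpace_fin⟩

theorem hausdorffMeasure_image_val_sphCap (s : Set (sphCap n θ)) :
    μH[(n : ℝ)] ((↑) '' s : Set (V n)) = μH[(n : ℝ)] s :=
  isometry_subtype_coe.hausdorffMeasure_image (.inl n.cast_nonneg) s

instance : IsFiniteMeasure (μH[(n : ℝ)] : Measure (sphCap n θ)) := by
  refine ⟨?_⟩
  rw [← hausdorffMeasure_image_val_sphCap]
  refine (measure_mono ?_).trans_lt hausdorffMeasure_sphere_lt_top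
  rintro _ ⟨u, -, rfl⟩
  exact mem_sphere_zero_iff_norm.2 u.2.1

theorem cos_lt_one_of_mem_Ioc (hθ : θ ∈ Ioc 0 (π / 2)) : cos θ < 1 := by
  simpa using cos_lt_cos_of_nonneg_of_le_pi_div_two le_rfl hθ.2 hθ.1

theorem sphCap_subset_closure (hθ : θ ∈ Ioc 0 (π / 2)) :
    sphCap n θ ⊆ closure ({u | cos θ < u (Fin.last n)} ∩ sphere 0 1) := by
  intro u hu
  let f : ℝ → V n := fun s => ‖u + s • Etop n‖⁻¹ • (u + s • Etop n)
  have hf₀ : f 0 = u := by simp [f, hu.1]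
  have hf : Tendsto f (𝓝[>] 0) (𝓝 u) := by
    have hcont : ContinuousAt f 0 := by
      have hne : ‖u + (0 : ℝ) • Etop n‖ ≠ 0 := by simp [hu.1]
      fun_prop (disch := exact hne)
    rw [ContinuousAt, hf₀] at hcont
    exact hcont.mono_left nhdsWithin_le_nhds
  refine mem_closure_of_tendsto hf (eventually_mem_nhdsWithin.mono fun s (hs : 0 < s) => ?_)
  have hcos := cos_nonneg_of_mem_Ioc hθ
  have hlast : 0 < u (Fin.last n) + s := add_pos_of_nonneg_of_pos (hcos.trans hu.2) hs
  have hne : u + s • Etop n ≠ 0 := fun h => by simpa [hlast.ne'] using congrArg (· (Fin.last n)) h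
  have hnorm : ‖u + s • Etop n‖ ≤ 1 + s := by
    simpa [hu.1, norm_smul, abs_of_pos hs] using norm_add_le u (s • Etop n)
  refine ⟨?_, mem_sphere_zero_iff_norm.2 (norm_smul_inv_norm hne)⟩
  have hf_last : f s (Fin.last n) = (u (Fin.last n) + s) / ‖u + s • Etop n‖ := by
    simp [f, div_eq_inv_mul, mul_add]
  rw [mem_ofPred_eq, hf_last, lt_div_iff₀ (norm_pos_iff.2 hne)]
  nlinarith [hu.2, mul_le_mul_of_nonneg_left hnorm hcos, cos_lt_one_of_mem_Ioc hθ]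

theorem isOpenPosMeasure_sphCap (hθ : θ ∈ Ioc 0 (π / 2)) :
    (μH[(n : ℝ)] : Measure (sphCap n θ)).IsOpenPosMeasure := by
  refine ⟨?_⟩
  rintro _ ⟨U, hU, rfl⟩ ⟨u, hu⟩
  obtain ⟨w, hwU, hw⟩ := mem_closure_iff.1 (sphCap_subset_closure hθ u.2) U hU hu
  have hopen : IsOpen (U ∩ {u : V n | cos θ < u (Fin.last n)}) :=
    hU.inter (isOpen_lt continuous_const (by fun_prop))
  rw [← hausdorffMeasure_image_val_sphCap]
  refine ((hausdorffMeasure_inter_sphere_pos hopen ⟨⟨hwU, hw.1⟩, hw.2⟩).trans_le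
    (measure_mono ?_)).ne'
  exact fun x hx => ⟨⟨x, mem_sphere_zero_iff_norm.1 hx.2, hx.1.2.le⟩, hx.1.1, rfl⟩

theorem add_mem_sphCap_iff {ζ : V n} : ζ + cos θ • Etop n ∈ sphCap n θ ↔ ζ ∈ capCap n θ := by
  simp [sphCap, capCap, and_comm]

theorem sub_mem_capCap {u : V n} (hu : u ∈ sphCap n θ) : u - cos θ • Etop n ∈ capCap n θ :=
  add_mem_sphCap_iff.1 (by rwa [sub_add_cancel])

theorem setIntegral_capCap (f : V n → ℝ) :
    ∫ ζ in capCap n θ, f ζ ∂μH[(n : ℝ)] =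
      ∫ u : sphCap n θ, f (u - cos θ • Etop n) ∂μH[(n : ℝ)] := by
  have hiso : Isometry fun u : sphCap n θ => (u : V n) - cos θ • Etop n :=
    (IsometryEquiv.subRight (cos θ • Etop n)).isometry.comp isometry_subtype_coe
  have hrange : range (fun u : sphCap n θ => (u : V n) - cos θ • Etop n) = capCap n θ := by
    ext ζ
    refine ⟨?_, fun hζ => ⟨⟨_, add_mem_sphCap_iff.2 hζ⟩, add_sub_cancel_right _ _⟩⟩
    rintro ⟨u, rfl⟩
    exact sub_mem_capCap u.2
  rw [← hrange, ← hiso.map_hausdorffMeasure (.inl n.cast_nonneg),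
    hiso.isClosedEmbedding.integral_map]

end CapMeasure

section Horizontal

open Submodule

variable {n : ℕ} {θ : ℝ} {v : V n}

/-- The horizontal hyperplane `{x_{n+1} = 0}` as a linear subspace. -/
def horizontal (n : ℕ) : Submodule ℝ (V n) := (ℝ ∙ Etop n)ᗮ

theorem mem_horizontal_iff : v ∈ horizontal n ↔ v (Fin.last n) = 0 := by
  rw [horizontal, mem_orthogonal_singleton_iff_inner_right, inner_Etop_left]

theorem sub_last_smul_Etop_mem_horizontal (x : V n) : x - x (Fin.last n) • Etop n ∈ horizontal n :=
  mem_horizontal_iff.2 (by simp)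

theorem inner_sub_smul_Etop (hv : v ∈ horizontal n) (x : V n) (r : ℝ) :
    ⟪x - r • Etop n, v⟫ = ⟪x, v⟫ := by
  rw [inner_sub_left, real_inner_smul_left, inner_Etop_left, mem_horizontal_iff.1 hv, mul_zero,
    sub_zero]

theorem reflection_mem_sphCap (hv : v ∈ horizontal n) {u : V n} (hu : u ∈ sphCap n θ) :
    (ℝ ∙ v)ᗮ.reflection u ∈ sphCap n θ := by
  have hE : (ℝ ∙ v)ᗮ.reflection (Etop n) = Etop n :=
    reflection_mem_subspace_eq_self <| mem_orthogonal_singleton_iff_inner_right.2 <| by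
      rw [inner_Etop, mem_horizontal_iff.1 hv]
  refine ⟨by rw [LinearIsometryEquiv.norm_map, hu.1], hu.2.trans_eq ?_⟩
  rw [← inner_Etop, ← inner_Etop, ← LinearIsometryEquiv.inner_map_map ((ℝ ∙ v)ᗮ.reflection) u, hE]

/-- The isometry of the cap `S^n_θ` induced by the reflection that negates the horizontal vector
`v`. -/
def capReflection (hv : v ∈ horizontal n) : sphCap n θ ≃ᵢ sphCap n θ :=
  .mk' (fun u => ⟨(ℝ ∙ v)ᗮ.reflection u, reflection_mem_sphCap hv u.2⟩)
    (fun u => ⟨(ℝ ∙ v)ᗮ.reflection u, reflection_mem_sphCap hv u.2⟩)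
    (fun u => Subtype.ext (reflection_reflection _ (u : V n)))
    fun u w => (ℝ ∙ v)ᗮ.reflection.isometry (u : V n) w

theorem capReflection_capReflection (hv : v ∈ horizontal n) (u : sphCap n θ) :
    capReflection hv (capReflection hv u) = u :=
  Subtype.ext (reflection_reflection _ (u : V n))

theorem inner_capReflection (hv : v ∈ horizontal n) (u : sphCap n θ) :
    ⟪(capReflection hv u : V n), v⟫ = -⟪(u : V n), v⟫ := by
  calc
    ⟪(ℝ ∙ v)ᗮ.reflection u, v⟫ = ⟪(ℝ ∙ v)ᗮ.reflection u, -(ℝ ∙ v)ᗮ.reflection v⟫ := by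
      rw [reflection_orthogonalComplement_singleton_eq_neg, neg_neg]
    _ = -⟪(u : V n), v⟫ := by rw [inner_neg_right, LinearIsometryEquiv.inner_map_map]

theorem coe_sub_capReflection (hv : v ∈ horizontal n) (u : sphCap n θ) :
    (u : V n) - capReflection hv u = (2 * (⟪(u : V n), v⟫ / ‖v‖ ^ 2)) • v := by
  have hcoe : (capReflection hv u : V n) = (ℝ ∙ v)ᗮ.reflection u := rfl
  rw [hcoe, reflection_orthogonal_apply, reflection_singleton_apply, real_inner_comm]
  simp only [RCLike.ofReal_real_eq_id, id_eq]
  module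

end Horizontal

section OuterNormal

variable {E : Type*} [NormedAddCommGroup E] [InnerProductSpace ℝ E]

theorem exists_mem_forall_inner_pos [CompleteSpace E] {N : Set E} (hN : IsClosed N)
    (hconv : Convex ℝ N) (hne : N.Nonempty) (hzero : (0 : E) ∉ N) :
    ∃ v ∈ N, ∀ p ∈ N, 0 < ⟪p, v⟫ := by
  obtain ⟨v, hv, hmin⟩ := exists_norm_eq_iInf_of_complete_convex hne hN.isComplete hconv 0
  rw [norm_eq_iInf_iff_real_inner_le_zero hconv hv] at hmin
  have hvpos : 0 < ‖v‖ ^ 2 := pow_pos (norm_pos_iff.2 (ne_of_mem_of_not_mem hv hzero)) 2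
  refine ⟨v, hv, fun p hp => ?_⟩
  have := hmin p hp
  rw [zero_sub, inner_neg_left, inner_sub_right, real_inner_self_eq_norm_sq,
    real_inner_comm] at this
  linarith

variable {L : Submodule ℝ E} {K : Set E} {z : E} {m : ℝ}

/-- The outer normals `v` of `K` at `z` that lie in `L`, normalised by `m ≤ ⟪z, v⟫`. -/
def outerNormals (L : Submodule ℝ E) (K : Set E) (z : E) (m : ℝ) : Set E :=
  {v | v ∈ L ∧ (∀ y ∈ K, ⟪y - z, v⟫ ≤ 0) ∧ m ≤ ⟪z, v⟫}

theorem outerNormals_eq_inter :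
    outerNormals L K z m = (L : Set E) ∩
      ((⋂ y ∈ K, {v | ⟪y - z, v⟫ ≤ 0}) ∩ {v | m ≤ ⟪z, v⟫}) := by
  ext v
  simp [outerNormals]

theorem isClosed_outerNormals [FiniteDimensional ℝ E] : IsClosed (outerNormals L K z m) := by
  rw [outerNormals_eq_inter]
  exact L.closed_of_finiteDimensional.inter
    ((isClosed_biInter fun y _ => isClosed_le (by fun_prop) continuous_const).inter
      (isClosed_le continuous_const (by fun_prop)))

theorem convex_outerNormals : Convex ℝ (outerNormals L K z m) := by
  rw [outerNormals_eq_inter]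
  exact L.convex.inter ((convex_iInter₂ fun y _ =>
    convex_halfSpace_le (innerₛₗ ℝ (y - z)).isLinear 0).inter
      (convex_halfSpace_ge (innerₛₗ ℝ z).isLinear m))

theorem exists_mem_outerNormals_forall_inner_pos [FiniteDimensional ℝ E] (hm : 0 < m)
    (hne : (outerNormals L K z m).Nonempty) :
    ∃ v ∈ outerNormals L K z m, ∀ p ∈ outerNormals L K z m, 0 < ⟪p, v⟫ := by
  have := FiniteDimensional.complete ℝ E
  exact exists_mem_forall_inner_pos isClosed_outerNormals convex_outerNormals hne
    fun h => hm.not_ge (by simpa using h.2.2)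

end OuterNormal

section Contact

variable {n : ℕ} {θ m : ℝ} {H : V n → ℝ} {z v : V n}

theorem sub_last_smul_Etop_mem_outerNormals (hθ : 0 ≤ cos θ) (hm : ∀ u ∈ sphCap n θ, m ≤ H u)
    (hz : z ∈ horizontal n) {u : V n} (hu : u ∈ sphCap n θ) (hcontact : ⟪u, z⟫ = H u) :
    u - u (Fin.last n) • Etop n ∈ outerNormals (horizontal n) (wulffShape n θ H) z m := by
  refine ⟨sub_last_smul_Etop_mem_horizontal u, fun y hy => ?_, ?_⟩
  · rw [real_inner_comm, inner_sub_right, inner_sub_smul_Etop hz, hcontact, inner_sub_left,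
      real_inner_smul_left, inner_Etop_left]
    linarith [hy.2 u hu, mul_nonneg (hθ.trans hu.2) hy.1]
  · rw [real_inner_comm, inner_sub_smul_Etop hz, hcontact]
    exact hm u hu

theorem exists_outerNormal_wulffShape (hθ : 0 ≤ cos θ) (hH : ContinuousOn H (sphCap n θ))
    (hpos : ∀ u ∈ sphCap n θ, 0 < H u) (hz : z ∈ horizontal n)
    (hcontact : ∃ u ∈ sphCap n θ, ⟪u, z⟫ = H u) :
    ∃ v ∈ horizontal n, (∀ y ∈ wulffShape n θ H, ⟪y - z, v⟫ ≤ 0) ∧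
      ∀ u ∈ sphCap n θ, ⟪u, z⟫ = H u → 0 < ⟪u, v⟫ := by
  obtain ⟨m, hm, hle⟩ := isCompact_sphCap.exists_forall_le' hH hpos
  have hmem := fun u (hu : u ∈ sphCap n θ) (hcontact : ⟪u, z⟫ = H u) =>
    sub_last_smul_Etop_mem_outerNormals hθ hle hz hu hcontact
  obtain ⟨u₀, hu₀, hu₀z⟩ := hcontact
  obtain ⟨v, ⟨hvL, hvK, -⟩, hv⟩ := exists_mem_outerNormals_forall_inner_pos hm ⟨_, hmem u₀ hu₀ hu₀z⟩
  exact ⟨v, hvL, hvK, fun u hu huz => by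
    simpa only [inner_sub_smul_Etop hvL] using hv _ (hmem u hu huz)⟩

theorem sub_inner_le_sub_inner_capReflection {u : sphCap n θ}
    (hsupp : ∃ y ∈ wulffShape n θ H, ⟪(u : V n), y⟫ = H u) (hv : v ∈ horizontal n)
    (hnormal : ∀ y ∈ wulffShape n θ H, ⟪y - z, v⟫ ≤ 0) (huv : 0 ≤ ⟪(u : V n), v⟫) :
    H u - ⟪(u : V n), z⟫ ≤
      H (capReflection hv u) - ⟪(capReflection hv u : V n), z⟫ := by
  obtain ⟨y, hy, hyu⟩ := hsupp
  have hle : ⟪(u : V n) - capReflection hv u, y - z⟫ ≤ 0 := by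
    rw [coe_sub_capReflection, real_inner_smul_left, real_inner_comm (y - z)]
    exact mul_nonpos_of_nonneg_of_nonpos (by positivity) (hnormal y hy)
  have := hy.2 _ (capReflection hv u).2
  simp only [inner_sub_left, inner_sub_right] at hle
  linarith

theorem descentRate_freezeBelow_neg (hθ : θ ∈ Ioc 0 (π / 2)) (hH : ContinuousOn H (sphCap n θ))
    {φ : ℝ → ℝ} (hφc : ContinuousOn φ (Ioi 0)) (hφ : StrictMonoOn φ (Ioi 0))
    (hsupp : ∀ u ∈ sphCap n θ, ∃ y ∈ wulffShape n θ H, ⟪u, y⟫ = H u) (hv : v ∈ horizontal n)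
    (hnormal : ∀ y ∈ wulffShape n θ H, ⟪y - z, v⟫ ≤ 0) {u₀ : sphCap n θ}
    (hcontact : ⟪(u₀ : V n), z⟫ = H u₀) (huv : 0 < ⟪(u₀ : V n), v⟫) {c : ℝ} (hc : 0 < c)
    (hcz : ∀ u : sphCap n θ, ⟪(u : V n), v⟫ ≤ 0 → c < H u - ⟪(u : V n), z⟫) :
    descentRate μH[(n : ℝ)] ((↑) : sphCap n θ → V n) (fun u => H u) (freezeBelow φ c) z v < 0 := by
  have := isOpenPosMeasure_sphCap (n := n) hθ
  have hH' := continuous_comp_coe_sphCap hH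
  have hφc' : Continuous (freezeBelow φ c) := continuous_freezeBelow hφc hc
  refine integral_mul_neg_of_odd (τ := (capReflection hv).toHomeomorph) (x₀ := u₀)
    (capReflection_capReflection hv) ((capReflection hv).measurePreserving_hausdorffMeasure n)
    (hφc'.comp (hH'.sub (by fun_prop))) (by fun_prop) (inner_capReflection hv)
    (fun u hu => ?_) huv ?_
  · exact monotone_freezeBelow hφ.monotoneOn hc
      (sub_inner_le_sub_inner_capReflection (hsupp u u.2) hv hnormal hu)
  · refine freezeBelow_lt_freezeBelow hφ hc ?_ (hcz _ ?_)
    · rw [hcontact, sub_self]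
      exact hc.le
    · exact (inner_capReflection hv u₀).trans_le (neg_nonpos.2 huv.le)

end Contact

section EntropyPoint

variable {n : ℕ} {θ : ℝ} {m : ℕ∞} {h H : V n → ℝ} {φ : ℝ → ℝ} {v w z : V n}

/-- The entropy points of `H` for `φ = ψ'`: the horizontal critical points `z` of
`z ↦ ∫ ψ (H u - ⟪u, z⟫)` over the cap `S^n_θ` at which the argument of `ψ` is positive. -/
def IsEntropyPoint (n : ℕ) (θ : ℝ) (φ : ℝ → ℝ) (H : V n → ℝ) (z : V n) : Prop :=
  z ∈ horizontal n ∧ (∀ u ∈ sphCap n θ, 0 < H u - ⟪u, z⟫) ∧ ∀ v ∈ horizontal n,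
    descentRate μH[(n : ℝ)] ((↑) : sphCap n θ → V n) (fun u => H u) φ z v = 0

theorem feasibleSet_horizontal_eq_inter :
    feasibleSet (horizontal n) ((↑) : sphCap n θ → V n) (fun u => H u) =
      wulffShape n θ H ∩ horizontal n := by
  ext z
  exact ⟨fun hz => ⟨⟨(mem_horizontal_iff.1 hz.1).ge, fun u hu => hz.2 ⟨u, hu⟩⟩, hz.1⟩,
    fun hz => ⟨hz.2, fun u => hz.1.2 u u.2⟩⟩

theorem exists_isEntropyPoint (hn : 1 ≤ n) (hθ : θ ∈ Ioc 0 (π / 2))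
    (hH : ContinuousOn H (sphCap n θ)) (hpos : ∀ u ∈ sphCap n θ, 0 < H u)
    (hsupp : ∀ u ∈ sphCap n θ, ∃ y ∈ wulffShape n θ H, ⟪u, y⟫ = H u)
    (hφc : ContinuousOn φ (Ioi 0)) (hφ : StrictMonoOn φ (Ioi 0)) :
    ∃ z, IsEntropyPoint n θ φ H z := by
  have hcompact : IsCompact
      (feasibleSet (horizontal n) ((↑) : sphCap n θ → V n) fun u => H u) := by
    rw [feasibleSet_horizontal_eq_inter]
    exact (isCompact_wulffShape hn hθ hH).inter_right
      (horizontal n).closed_of_finiteDimensional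
  obtain ⟨z, hz, hdefect, hcritical⟩ := exists_forall_pos_forall_descentRate_eq_zero
    (μ := μH[(n : ℝ)]) continuous_subtype_val (continuous_comp_coe_sphCap hH) hφc hφ.monotoneOn
    hcompact ⟨0, zero_mem _, fun u => by simpa using (hpos u u.2).le⟩
    fun z hz ⟨u₀, hu₀⟩ => by
      obtain ⟨v, hv, hnormal, hinner⟩ := exists_outerNormal_wulffShape (cos_nonneg_of_mem_Ioc hθ)
        hH hpos hz.1 ⟨u₀, u₀.2, hu₀⟩
      exact ⟨v, hv, fun u => hinner u u.2, fun c hc hcz => descentRate_freezeBelow_neg hθ hH hφc hφ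
        hsupp hv hnormal hu₀ (hinner u₀ u₀.2 hu₀) hc hcz⟩
  exact ⟨z, hz, fun u hu => hdefect ⟨u, hu⟩, hcritical⟩

theorem exists_mem_sphCap_inner_ne_zero (hθ : θ ∈ Ioc 0 (π / 2)) (hv : v ∈ horizontal n)
    (hne : v ≠ 0) : ∃ u ∈ sphCap n θ, ⟪u, v⟫ ≠ 0 := by
  have hunit : ‖‖v‖⁻¹ • v‖ = 1 := norm_smul_inv_norm hne
  have hbdry := smul_add_mem_sphCapBdry (θ := θ) hunit
    (mem_horizontal_iff.1 ((horizontal n).smul_mem _ hv))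
  refine ⟨_, ⟨hbdry.1, hbdry.2.ge⟩, ?_⟩
  simp [inner_add_left, inner_smul_left, mem_horizontal_iff.1 hv, hne,
    (sin_pos_of_mem_Ioc hθ).ne']

theorem IsEntropyPoint.eq (hz : IsEntropyPoint n θ φ H z) (hw : IsEntropyPoint n θ φ H w)
    (hθ : θ ∈ Ioc 0 (π / 2)) (hH : ContinuousOn H (sphCap n θ)) (hφc : ContinuousOn φ (Ioi 0))
    (hφ : StrictMonoOn φ (Ioi 0)) : z = w := by
  by_contra hne
  have := isOpenPosMeasure_sphCap (n := n) hθ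
  have hwz : w - z ∈ horizontal n := (horizontal n).sub_mem hw.1 hz.1
  obtain ⟨u₀, hu₀, hinner⟩ := exists_mem_sphCap_inner_ne_zero hθ hwz (sub_ne_zero.2 (Ne.symm hne))
  have hlt := descentRate_sub_lt (μ := μH[(n : ℝ)]) (u := ((↑) : sphCap n θ → V n)) hφc hφ
    continuous_subtype_val (continuous_comp_coe_sphCap hH) (fun u => hz.2.1 u u.2)
    (fun u => hw.2.1 u u.2) (x₀ := ⟨u₀, hu₀⟩) hinner
  rw [hz.2.2 _ hwz, hw.2.2 _ hwz] at hlt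
  exact hlt.false

theorem IsHomExt.apply_sub (hext : IsHomExt n θ m h H) {u : V n} (hu : u ∈ sphCap n θ) :
    h (u - cos θ • Etop n) = H u := by
  rw [← hext.2.2 _ (sub_mem_capCap hu), sub_add_cancel]

theorem IsHomExt.setIntegral_capCap_eq_descentRate (hext : IsHomExt n θ m h H)
    (hz : z ∈ horizontal n) {i : Fin (n + 1)} (hi : i ≠ Fin.last n) :
    ∫ ζ in capCap n θ, φ (h ζ - ⟪ζ, z⟫) * ζ i ∂μH[(n : ℝ)] =
      descentRate μH[(n : ℝ)] ((↑) : sphCap n θ → V n) (fun u => H u) φ z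
        (EuclideanSpace.single i 1) := by
  rw [setIntegral_capCap, descentRate]
  refine integral_congr_ae (.of_forall fun u => ?_)
  simp only [hext.apply_sub u.2, inner_sub_smul_Etop hz]
  simp [Etop, hi, EuclideanSpace.inner_single_right]

theorem IsHomExt.isEntropyPoint_iff (hext : IsHomExt n θ m h H) (hn : 1 ≤ n)
    (hpos : ∀ u ∈ sphCap n θ, 0 < H u) (hφ : ContinuousOn φ (Ioi 0)) :
    IsEntropyPoint n θ φ H z ↔ z ∈ relintBase n (wulffShape n θ H) ∧
      ∀ i : Fin (n + 1), i ≠ Fin.last n →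
        ∫ ζ in capCap n θ, φ (h ζ - ⟪ζ, z⟫) * ζ i ∂μH[(n : ℝ)] = 0 := by
  rw [mem_relintBase_wulffShape_iff hn hext.continuousOn hpos, ← mem_horizontal_iff, and_assoc]
  refine and_congr_right fun hz => and_congr_right fun hdefect => ⟨fun hcritical i hi => ?_,
    fun hint v hv => ?_⟩
  · rw [hext.setIntegral_capCap_eq_descentRate hz hi]
    exact hcritical _ (mem_horizontal_iff.2 (by simp [hi.symm]))
  · have hsum : ∑ i, v i • EuclideanSpace.single i (1 : ℝ) = v := by
      simpa using (EuclideanSpace.basisFun (Fin (n + 1)) ℝ).sum_repr v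
    rw [← hsum, descentRate_sum_smul _ continuous_subtype_val
      (continuous_comp_sub_inner hφ continuous_subtype_val
        (continuous_comp_coe_sphCap hext.continuousOn) fun u => hdefect u u.2)]
    refine Finset.sum_eq_zero fun i _ => ?_
    rcases eq_or_ne i (Fin.last n) with rfl | hi
    · rw [mem_horizontal_iff.1 hv, zero_mul]
    · rw [← hext.setIntegral_capCap_eq_descentRate hz hi, hint i hi, mul_zero]

end EntropyPoint

theorem capillary_entropy_point_general_general (φ : ℝ → ℝ) (hφc : ContinuousOn φ (Ioi 0))
    (hφ : StrictMonoOn φ (Ioi 0)) (n : ℕ) (hn : 1 ≤ n) (θ : ℝ) (hθ : θ ∈ Ioc 0 (π / 2))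
    (h H : V n → ℝ) (hext : IsHomExt n θ 2 h H)
    (hbdry : ∀ u ∈ sphCapBdry n θ, 0 ≤ fderiv ℝ H u (Etop n))
    (hτ : TauNonneg n θ H) (hpos : ∀ ζ ∈ capCap n θ, 0 < h ζ) :
    ∃ K : Set (V n), IsCompact K ∧ Convex ℝ K ∧ (interior K).Nonempty ∧
      (∀ x ∈ K, 0 ≤ x (Fin.last n)) ∧ (relintBase n K).Nonempty ∧
      (∀ ζ ∈ capCap n θ, suppFn n K (ζ + Real.cos θ • Etop n) = h ζ) ∧
      (∃! z : V n, z ∈ relintBase n K ∧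
        ∀ i : Fin (n + 1), i ≠ Fin.last n →
          ∫ ζ in capCap n θ, φ (h ζ - ⟪ζ, z⟫) * ζ i ∂μH[(n : ℝ)] = 0) ∧
      (∀ z : V n, z ∈ relintBase n K →
        (∀ i : Fin (n + 1), i ≠ Fin.last n →
          ∫ ζ in capCap n θ, φ (h ζ - ⟪ζ, z⟫) * ζ i ∂μH[(n : ℝ)] = 0) →
        ∀ ζ ∈ capCap n θ, 0 < h ζ - ⟪ζ, z⟫) := by
  have hH := hext.continuousOn
  have hHpos : ∀ u ∈ sphCap n θ, 0 < H u := fun u hu =>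
    hext.apply_sub hu ▸ hpos _ (sub_mem_capCap hu)
  have hsupp : ∀ u ∈ sphCap n θ, ∃ y ∈ wulffShape n θ H, ⟪u, y⟫ = H u := fun u hu =>
    hext.exists_mem_wulffShape_inner_eq hbdry hτ hn hθ hu
  have hentropy := fun z => hext.isEntropyPoint_iff (z := z) hn hHpos hφc
  obtain ⟨z, hz⟩ := exists_isEntropyPoint hn hθ hH hHpos hsupp hφc hφ
  refine ⟨wulffShape n θ H, isCompact_wulffShape hn hθ hH, convex_wulffShape,
    interior_wulffShape_nonempty hH hHpos, fun y hy => hy.1, ⟨z, ((hentropy z).1 hz).1⟩,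
    fun ζ hζ => ?_, ⟨z, (hentropy z).1 hz, fun w hw => ?_⟩, fun w hw hint ζ hζ => ?_⟩
  · have hu := add_mem_sphCap_iff.2 hζ
    rw [suppFn_wulffShape hu (hsupp _ hu), hext.2.2 ζ hζ]
  · exact ((hentropy w).2 hw).eq hz hθ hH hφc hφ
  · obtain ⟨hhor, hdefect, -⟩ := (hentropy w).2 ⟨hw, hint⟩
    have := hdefect _ (add_mem_sphCap_iff.2 hζ)
    rwa [hext.2.2 ζ hζ, ← inner_sub_smul_Etop hhor _ (cos θ), add_sub_cancel_right] at this

/-- a nonnegative capillary function with `τ ≥ 0` is the capillary support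
function of a capillary convex set, and existence/uniqueness of its entropy point. -/
theorem capillary_entropy_point_general (ψ : ℝ → ℝ) (hψ : PsiOK ψ) (n : ℕ) (hn : 1 ≤ n)
    (θ : ℝ) (hθ : θ ∈ Ioc 0 (π / 2))
    (h H : V n → ℝ) (hext : IsHomExt n θ 3 h H) (hcap : IsCapillaryF n θ H)
    (hτ : TauNonneg n θ H) (hpos : ∀ ζ ∈ capCap n θ, 0 < h ζ) :
    ∃ K : Set (V n), IsCompact K ∧ Convex ℝ K ∧ (interior K).Nonempty ∧
      (∀ x ∈ K, 0 ≤ x (Fin.last n)) ∧ (relintBase n K).Nonempty ∧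
      (∀ ζ ∈ capCap n θ, suppFn n K (ζ + Real.cos θ • Etop n) = h ζ) ∧
      (∃! z : V n, z ∈ relintBase n K ∧
        ∀ i : Fin (n + 1), i ≠ Fin.last n →
          ∫ ζ in capCap n θ, deriv ψ (h ζ - ⟪ζ, z⟫) * ζ i ∂μH[(n : ℝ)] = 0) ∧
      (∀ z : V n, z ∈ relintBase n K →
        (∀ i : Fin (n + 1), i ≠ Fin.last n →
          ∫ ζ in capCap n θ, deriv ψ (h ζ - ⟪ζ, z⟫) * ζ i ∂μH[(n : ℝ)] = 0) →
        ∀ ζ ∈ capCap n θ, 0 < h ζ - ⟪ζ, z⟫) :=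
  capillary_entropy_point_general_general _ hψ.continuousOn_deriv hψ.strictMonoOn_deriv n hn θ hθ
    h H (hext.of_le (by norm_num)) (fun u hu => (hcap u hu).ge) hτ hpos
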